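/- For every n ≥ 2, the automorphism group Aut(F_n) of the free group F_n of rank n has uniformly exponential growth, i.e., ω(Aut(F_n)) > 1. -/

import Mathlib

open Filter

variable {G : Type*} [Group G]

noncomputable def wordLength (S : Set G) (g : G) : ℕ :=
  sInf {k | ∃ w : List G, w.length = k ∧ (∀ x ∈ w, x ∈ S ∨ x⁻¹ ∈ S) ∧ w.prod = g}

noncomputable def ballCard (S : Set G) (n : ℕ) : ℕ :=
  Set.ncard {g : G | wordLength S g ≤ n}

noncomputable def growthRate (S : Set G) : ℝ :=
  limUnder atTop (fun n : ℕ => (ballCard S n : ℝ) ^ ((n : ℝ)⁻¹))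

noncomputable def minGrowth (G : Type*) [Group G] : ℝ :=
  sInf {x : ℝ | ∃ S : Finset G, Subgroup.closure (S : Set G) = ⊤ ∧ growthRate (S : Set G) = x}

section
open Polynomial

namespace UEG

abbrev Mat (n : ℕ) := Matrix (Fin n) (Fin n) ℂ

/-- A submultiplicative norm on complex matrices. -/
structure ANorm (n : ℕ) where
  f : Mat n → ℝ
  add_le : ∀ x y, f (x + y) ≤ f x + f y
  smul : ∀ (c : ℂ) x, f (c • x) = ‖c‖ * f x
  mul_le : ∀ x y, f (x * y) ≤ f x * f y
  pos : ∀ x, x ≠ 0 → 0 < f x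

namespace ANorm

variable {n : ℕ} (ν : ANorm n)

lemma zero : ν.f 0 = 0 := by
  have := ν.smul 0 0
  simpa using this

lemma nonneg (x : Mat n) : 0 ≤ ν.f x := by
  by_cases h : x = 0
  · simp [h, ν.zero]
  · exact (ν.pos x h).le

lemma eq_zero {x : Mat n} (h : ν.f x ≤ 0) : x = 0 := by
  by_contra hx
  exact absurd (ν.pos x hx) (not_lt.mpr h)

lemma neg (x : Mat n) : ν.f (-x) = ν.f x := by
  have := ν.smul (-1) x
  simpa using this

lemma sub_le (x y : Mat n) : ν.f (x - y) ≤ ν.f x + ν.f y := by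
  rw [sub_eq_add_neg, ← ν.neg y]; exact ν.add_le _ _

lemma sub_ge (x y : Mat n) : ν.f x - ν.f y ≤ ν.f (x - y) := by
  have := ν.add_le (x - y) y
  rw [sub_add_cancel] at this; linarith

lemma add_ge (x y : Mat n) : ν.f x - ν.f y ≤ ν.f (x + y) := by
  have := ν.sub_le (x + y) y
  rw [add_sub_cancel_right] at this; linarith

lemma mul_le_of {x y : Mat n} {a : ℝ} (h : ν.f x ≤ a) : ν.f (x * y) ≤ a * ν.f y :=
  (ν.mul_le x y).trans (mul_le_mul_of_nonneg_right h (ν.nonneg y))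

lemma pow_mul_le (x v : Mat n) {a : ℝ} (h : ν.f x ≤ a) (m : ℕ) :
    ν.f (x ^ m * v) ≤ a ^ m * ν.f v := by
  have ha : 0 ≤ a := (ν.nonneg x).trans h
  induction m with
  | zero => simp
  | succ m ih =>
    rw [pow_succ', mul_assoc]
    calc _ ≤ a * ν.f (x ^ m * v) := ν.mul_le_of h
      _ ≤ a * (a ^ m * ν.f v) := by gcongr
      _ = _ := by ring

lemma sub_smul_mul (x z : Mat n) (c : ℂ) :
    aeval x (X - C c) * z = x * z - c • z := by
  simp [sub_mul, Algebra.algebraMap_eq_smul_one]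

lemma pow_bound (x : Mat n) {M β : ℝ} (hβ : 0 < β) (hM : ν.f x ≤ M) (s : Multiset ℂ)
    (hs : ∀ c ∈ s, ‖c‖ ≤ β) (z : Mat n)
    (hz : aeval x (s.map fun c => X - C c).prod * z = 0) (m : ℕ) :
    ν.f (x ^ m * z) ≤ (2 * β) ^ m * (2 + M / β) ^ s.card * ν.f z := by
  have hM0 : 0 ≤ M := (ν.nonneg x).trans hM
  have hq : 0 ≤ 2 + M / β := by positivity
  induction s using Multiset.induction generalizing z m with
  | empty =>
    simp at hz
    simp [hz, ν.zero]
  | cons c s ih =>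
    have hc : ‖c‖ ≤ β := hs c (Multiset.mem_cons_self _ _)
    have hs' : ∀ c ∈ s, ‖c‖ ≤ β := fun d hd => hs d (Multiset.mem_cons_of_mem hd)
    set z' := x * z - c • z with hz'
    have hz'0 : aeval x (s.map fun c => X - C c).prod * z' = 0 := by
      rw [hz', ← sub_smul_mul, ← mul_assoc, ← map_mul, mul_comm, ← hz]
      simp
    have ih' := ih hs' z' hz'0
    have hn : ν.f z' ≤ (M + β) * ν.f z := by
      calc ν.f z' ≤ ν.f (x * z) + ν.f (c • z) := ν.sub_le _ _
        _ ≤ M * ν.f z + β * ν.f z := by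
            rw [ν.smul]
            exact add_le_add (ν.mul_le_of hM) (mul_le_mul_of_nonneg_right hc (ν.nonneg z))
        _ = _ := by ring
    have hz0 := ν.nonneg z
    induction m with
    | zero =>
      have : 1 ≤ (2 + M / β) ^ (c ::ₘ s).card := one_le_pow₀ (by
        have : 0 ≤ M / β := by positivity
        linarith)
      simp only [pow_zero, one_mul]
      nlinarith
    | succ m ihm =>
      have e : x ^ (m + 1) * z = c • (x ^ m * z) + x ^ m * z' := by
        rw [hz', pow_succ, mul_sub]; simp [mul_assoc]
      rw [e, Multiset.card_cons]
      rw [Multiset.card_cons] at ihm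
      set q := 2 + M / β with hqd
      have hβq : β * q = 2 * β + M := by rw [hqd]; field_simp
      set A := (2 * β) ^ m * q ^ s.card * ν.f z
      have hA : 0 ≤ A := by positivity
      calc ν.f (c • (x ^ m * z) + x ^ m * z') ≤ ‖c‖ * ν.f (x ^ m * z) + ν.f (x ^ m * z') := by
            rw [← ν.smul]; exact ν.add_le _ _
        _ ≤ β * ((2 * β) ^ m * q ^ (s.card + 1) * ν.f z)
            + (2 * β) ^ m * q ^ s.card * ((M + β) * ν.f z) := by
            apply add_le_add
            · exact mul_le_mul hc ihm (ν.nonneg _) hβ.le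
            · exact (ih' m).trans (by gcongr)
        _ = A * (β * q + M + β) := by simp only [A]; ring
        _ ≤ A * (2 * (β * q)) := by
            apply mul_le_mul_of_nonneg_left _ hA
            rw [hβq]; linarith
        _ = _ := by simp only [A]; ring

lemma inv_bound (x : Mat n) {B δ : ℝ} (hδ : 0 < δ) (hδ1 : δ ≤ 1) (hB : ν.f x ≤ B) (s : Multiset ℂ)
    (hs : ∀ c ∈ s, δ ≤ ‖c‖ ∧ ‖c‖ ≤ B) (v : Mat n)
    (hv : aeval x (s.map fun c => X - C c).prod * v = 0) :
    ν.f v ≤ ((1 + 2 * B) / δ) ^ s.card * ν.f (x * v) := by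
  have hB0 : 0 ≤ B := (ν.nonneg x).trans hB
  induction s using Multiset.induction generalizing v with
  | empty =>
    simp at hv
    simp [hv, ν.zero]
  | cons c s ih =>
    obtain ⟨hc1, hc2⟩ := hs c (Multiset.mem_cons_self _ _)
    have hs' := fun d hd => hs d (Multiset.mem_cons_of_mem hd)
    set z' := x * v - c • v with hz'
    have hz'0 : aeval x (s.map fun c => X - C c).prod * z' = 0 := by
      rw [hz', ← sub_smul_mul, ← mul_assoc, ← map_mul, mul_comm, ← hv]
      simp
    have ih' := ih hs' z' hz'0
    have e1 : x * z' = x * (x * v) - c • (x * v) := by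
      rw [hz', mul_sub]; simp
    have e2 : ν.f (x * z') ≤ 2 * B * ν.f (x * v) := by
      rw [e1]
      calc _ ≤ ν.f (x * (x * v)) + ν.f (c • (x * v)) := ν.sub_le _ _
        _ ≤ B * ν.f (x * v) + B * ν.f (x * v) := by
            rw [ν.smul]
            exact add_le_add (ν.mul_le_of hB) (mul_le_mul_of_nonneg_right hc2 (ν.nonneg _))
        _ = _ := by ring
    have e3 : δ * ν.f v ≤ ν.f (x * v) + ν.f z' := by
      calc δ * ν.f v ≤ ‖c‖ * ν.f v := mul_le_mul_of_nonneg_right hc1 (ν.nonneg _)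
        _ = ν.f (c • v) := (ν.smul _ _).symm
        _ = ν.f (x * v - z') := by rw [hz']; congr 1; abel
        _ ≤ _ := ν.sub_le _ _
    set K := (1 + 2 * B) / δ with hK
    have hKδ : K * δ = 1 + 2 * B := by rw [hK]; field_simp
    have hK1 : 1 ≤ K := by
      rw [hK, le_div_iff₀ hδ]; linarith
    have hK2 : 1 ≤ K ^ s.card := one_le_pow₀ hK1
    have e4 : ν.f z' ≤ K ^ s.card * (2 * B * ν.f (x * v)) :=
      ih'.trans (mul_le_mul_of_nonneg_left e2 (by positivity))
    have hx0 := ν.nonneg (x * v)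
    rw [Multiset.card_cons]
    have : δ * ν.f v ≤ δ * (K ^ (s.card + 1) * ν.f (x * v)) := by
      calc _ ≤ ν.f (x * v) + K ^ s.card * (2 * B * ν.f (x * v)) := e3.trans (by linarith)
        _ ≤ K ^ s.card * ν.f (x * v) + K ^ s.card * (2 * B * ν.f (x * v)) := by
            gcongr
            nlinarith
        _ = K ^ s.card * (K * δ) * ν.f (x * v) := by rw [hKδ]; ring
        _ = _ := by ring
    exact le_of_mul_le_mul_left this hδ

lemma root_le (x : Mat n) {c : ℂ} (hc : c ∈ x.charpoly.roots) : ‖c‖ ≤ ν.f x := by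
  have h1 : x.charpoly.IsRoot c := (Polynomial.mem_roots'.mp hc).2
  have h2 : (Matrix.scalar (Fin n) c - x).det = 0 := by
    rw [← Matrix.eval_charpoly]; exact h1
  obtain ⟨v, hv, hv0⟩ := Matrix.exists_mulVec_eq_zero_iff.mpr h2
  set V : Mat n := Matrix.of fun i _ => v i with hV
  have hV0 : V ≠ 0 := by
    intro h
    apply hv
    ext i
    have := congrFun (congrFun h i) i
    simpa [hV] using this
  have e : x * V = c • V := by
    ext i j
    have := congrFun hv0 i
    simp only [Matrix.sub_mulVec, Pi.sub_apply, Pi.zero_apply, Matrix.scalar_apply,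
      Matrix.mulVec_diagonal] at this
    have h3 : (x.mulVec v) i = c * v i := by linear_combination -this
    simpa [hV, Matrix.mul_apply, Matrix.mulVec, dotProduct] using h3
  have h4 := ν.mul_le x V
  rw [e, ν.smul] at h4
  exact le_of_mul_le_mul_right h4 (ν.pos V hV0)

lemma card_roots (x : Mat n) : x.charpoly.roots.card = n := by
  rw [Polynomial.splits_iff_card_roots.mp (IsAlgClosed.splits _), Matrix.charpoly_natDegree_eq_dim]
  simp

lemma charpoly_eq (x : Mat n) : (x.charpoly.roots.map fun c => X - C c).prod = x.charpoly := by
  have := (IsAlgClosed.splits x.charpoly).eq_prod_roots_of_monic (Matrix.charpoly_monic x)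
  exact this.symm

lemma charpoly_kill (x v : Mat n) : aeval x (x.charpoly.roots.map fun c => X - C c).prod * v = 0 := by
  rw [charpoly_eq, Matrix.aeval_self_charpoly, zero_mul]

lemma prod_le (s : Multiset ℂ) {B : ℝ} (h : ∀ c ∈ s, ‖c‖ ≤ B) : ‖s.prod‖ ≤ B ^ s.card := by
  induction s using Multiset.induction with
  | empty => simp
  | cons c s ih =>
    have h1 := h c (Multiset.mem_cons_self _ _)
    have h2 := ih fun d hd => h d (Multiset.mem_cons_of_mem hd)
    rw [Multiset.prod_cons, norm_mul, Multiset.card_cons, pow_succ']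
    exact mul_le_mul h1 h2 (norm_nonneg _) ((norm_nonneg _).trans h1)

lemma sum_le (s : Multiset ℂ) {B : ℝ} (h : ∀ c ∈ s, ‖c‖ ≤ B) : ‖s.sum‖ ≤ s.card * B := by
  induction s using Multiset.induction with
  | empty => simp
  | cons c s ih =>
    have h1 := h c (Multiset.mem_cons_self _ _)
    have h2 := ih fun d hd => h d (Multiset.mem_cons_of_mem hd)
    rw [Multiset.sum_cons, Multiset.card_cons]
    push_cast
    have := norm_add_le c s.sum
    linarith

lemma det_eq (x : Mat n) : x.det = x.charpoly.roots.prod :=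
  Matrix.det_eq_prod_roots_charpoly_of_splits (IsAlgClosed.splits _)

lemma trace_eq (x : Mat n) : x.trace = x.charpoly.roots.sum :=
  Matrix.trace_eq_sum_roots_charpoly_of_splits (IsAlgClosed.splits _)

lemma det_le (x : Mat n) {B : ℝ} (h : ν.f x ≤ B) : ‖x.det‖ ≤ B ^ n := by
  rw [det_eq]
  have := prod_le x.charpoly.roots (B := B) fun c hc => (ν.root_le x hc).trans h
  rwa [card_roots] at this

lemma trace_le (x : Mat n) : ‖x.trace‖ ≤ n * ν.f x := by
  rw [trace_eq]
  have := sum_le x.charpoly.roots fun c hc => (ν.root_le x hc)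
  rwa [card_roots] at this

/-- lower bound for multiplication by a matrix whose determinant is not too small -/
lemma det_inv_bound (x : Mat n) {B η : ℝ} (hB1 : 1 ≤ B) (hB : ν.f x ≤ B) (hη : 0 < η) (hη1 : η ≤ 1)
    (hd : η ≤ ‖x.det‖) (v : Mat n) :
    ν.f v ≤ ((1 + 2 * B) * B ^ n / η) ^ n * ν.f (x * v) := by
  have hBn : 1 ≤ B ^ n := one_le_pow₀ hB1
  have := ν.inv_bound x (B := B) (δ := η / B ^ n) (by positivity)
    (by rw [div_le_one (by positivity)]; linarith) hB x.charpoly.roots (by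
      intro c hc
      refine ⟨?_, (ν.root_le x hc).trans hB⟩
      obtain ⟨t, ht⟩ := Multiset.exists_cons_of_mem hc
      have h1 : ‖t.prod‖ ≤ B ^ n := by
        have h2 := prod_le t (B := B) fun d hd =>
          (ν.root_le x (ht ▸ Multiset.mem_cons_of_mem hd)).trans hB
        refine h2.trans (pow_le_pow_right₀ hB1 ?_)
        have h3 := card_roots x
        rw [ht, Multiset.card_cons] at h3
        omega
      rw [div_le_iff₀ (by positivity)]
      rw [det_eq, ht, Multiset.prod_cons, norm_mul] at hd
      exact hd.trans (mul_le_mul_of_nonneg_left h1 (norm_nonneg _))) v (charpoly_kill x v)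
  rw [card_roots] at this
  convert this using 3
  field_simp

end ANorm

lemma inv_prod {n : ℕ} (a a' : Mat n) (h : a' * a = 1) (h' : a * a' = 1) (s : Multiset ℂ) (hs : ∀ c ∈ s, c ≠ 0) :
    ∃ (k : ℂ) (j : ℕ), aeval a' (s.map fun c => X - C c⁻¹).prod =
      k • (a' ^ j * aeval a (s.map fun c => X - C c).prod) := by
  induction s using Multiset.induction with
  | empty => exact ⟨1, 0, by simp⟩
  | cons c s ih =>
    obtain ⟨k, j, e⟩ := ih fun d hd => hs d (Multiset.mem_cons_of_mem hd)
    have hc := hs c (Multiset.mem_cons_self _ _)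
    refine ⟨-c⁻¹ * k, j + 1, ?_⟩
    have hcomm : Commute (aeval a (X - C c)) (a' ^ j) := by
      apply Commute.pow_right
      have : Commute a a' := by rw [Commute, SemiconjBy, h, h']
      simp only [map_sub, aeval_X, aeval_C]
      exact this.sub_left (Algebra.commute_algebraMap_left _ _)
    have e1 : aeval a' (X - C c⁻¹) = -c⁻¹ • (a' * aeval a (X - C c)) := by
      simp only [map_sub, aeval_X, aeval_C, mul_sub, h, Algebra.algebraMap_eq_smul_one,
        mul_smul_comm, mul_one, smul_sub, smul_smul]
      simp [hc]
      abel
    rw [Multiset.map_cons, Multiset.prod_cons, map_mul, e, e1, Multiset.map_cons,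
      Multiset.prod_cons, map_mul]
    rw [smul_mul_smul_comm]
    congr 1
    rw [pow_succ', mul_assoc, mul_assoc, ← mul_assoc (aeval a (X - C c)), hcomm.eq]
    simp only [mul_assoc]

end UEG

end

section
namespace UEG
open Polynomial

/-- abstract ping-pong -/
lemma pingpong {n : ℕ} (ν : ANorm n) (x h P : Mat n) (hx : IsUnit x) (hh : IsUnit h) {E : ℝ} (hE : 1 ≤ E)
    (hP : P * P = P) (hP0 : P ≠ 0) (hxP : x * P = P * x)
    (hpr : ∀ v, ν.f (P * v) ≤ E * ν.f v) (hpr' : ∀ v, ν.f ((1 - P) * v) ≤ E * ν.f v)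
    (hhE : ν.f h ≤ E) (hδ : ∀ p, P * p = p → ν.f p ≤ E * ν.f (P * (h * p)))
    (hne : ν.f P ≤ E * ν.f ((1 - P) * (h * P)))
    (hL : ∀ z p, P * z = 0 → P * p = p → 40 * E ^ 6 * (ν.f (x * z) * ν.f p) ≤ ν.f z * ν.f (x * p)) :
    ∀ w ∈ Submonoid.closure {x, h * x}, ∀ w' ∈ Submonoid.closure {x, h * x}, x * w ≠ h * x * w' := by
  classical
  have hE0 : 0 < E := by linarith
  obtain ⟨ε, hε⟩ : ∃ ε : ℝ, ε = 1 / (10 * E ^ 3) := ⟨_, rfl⟩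
  have hE3 : 1 ≤ E ^ 3 := one_le_pow₀ hE
  have hε0 : 0 < ε := by rw [hε]; positivity
  have hεE : ε * E ^ 3 = 1 / 10 := by rw [hε]; field_simp
  have hε1 : ε ≤ 1 := by nlinarith
  -- cone step for x
  have hPx : ∀ v, P * (x * v) = x * (P * v) := fun v => by rw [← mul_assoc, ← hxP, mul_assoc]
  have hQx : ∀ v, (1 - P) * (x * v) = x * ((1 - P) * v) := fun v => by
    rw [sub_mul, sub_mul, mul_sub, hPx]; simp
  have hPP : ∀ v, P * (P * v) = P * v := fun v => by rw [← mul_assoc, hP]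
  have hPQ : ∀ v, P * ((1 - P) * v) = 0 := fun v => by rw [sub_mul, mul_sub, hPP]; simp
  have hsplit : ∀ v, v = P * v + (1 - P) * v := fun v => by rw [sub_mul]; simp
  have cx : ∀ v, ν.f ((1 - P) * v) ≤ 4 * E ^ 3 * ν.f (P * v) →
      ν.f ((1 - P) * (x * v)) ≤ ε * ν.f (P * (x * v)) := by
    intro v hv
    rw [hPx, hQx]
    have h1 := hL ((1 - P) * v) (P * v) (hPQ v) (hPP v)
    rcases eq_or_lt_of_le (ν.nonneg (P * v)) with h0 | h0
    · rw [← h0] at hv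
      have := ν.eq_zero (hv.trans (by simp))
      rw [this, mul_zero, ν.zero]
      have := ν.nonneg (x * (P * v)); positivity
    · have h2 : 40 * E ^ 6 * (ν.f (x * ((1 - P) * v)) * ν.f (P * v)) ≤
          4 * E ^ 3 * ν.f (P * v) * ν.f (x * (P * v)) :=
        h1.trans (mul_le_mul_of_nonneg_right hv (ν.nonneg _))
      have h3 : (40 * E ^ 6 * ν.f (x * ((1 - P) * v))) * ν.f (P * v) ≤
          (4 * E ^ 3 * ν.f (x * (P * v))) * ν.f (P * v) := by linarith
      have h4 := le_of_mul_le_mul_right h3 h0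
      have h5 : 40 * E ^ 6 * ε = 4 * E ^ 3 := by
        calc _ = 40 * E ^ 3 * (ε * E ^ 3) := by ring
          _ = _ := by rw [hεE]; ring
      rw [← h5] at h4
      have h6 : (40 * E ^ 6) * ν.f (x * ((1 - P) * v)) ≤ (40 * E ^ 6) * (ε * ν.f (x * (P * v))) := by
        linarith
      exact le_of_mul_le_mul_left h6 (by positivity)
  have cε : ∀ v, ν.f ((1 - P) * v) ≤ ε * ν.f (P * v) → ν.f ((1 - P) * v) ≤ 4 * E ^ 3 * ν.f (P * v) := by
    intro v hv
    refine hv.trans (mul_le_mul_of_nonneg_right ?_ (ν.nonneg _))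
    linarith
  have hhv : ∀ v, ν.f (h * v) ≤ E * ν.f v := fun v => ν.mul_le_of hhE
  have hE2 : ∀ v, ν.f (P * (h * v)) ≤ E ^ 2 * ν.f v := fun v => by
    have := mul_le_mul_of_nonneg_left (hhv v) hE0.le
    calc _ ≤ _ := hpr _
      _ ≤ _ := this
      _ = _ := by ring
  have hE2' : ∀ v, ν.f ((1 - P) * (h * v)) ≤ E ^ 2 * ν.f v := fun v => by
    have := mul_le_mul_of_nonneg_left (hhv v) hE0.le
    calc _ ≤ _ := hpr' _
      _ ≤ _ := this
      _ = _ := by ring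
  have ch : ∀ v, ν.f ((1 - P) * v) ≤ ε * ν.f (P * v) →
      ν.f ((1 - P) * (h * v)) ≤ 4 * E ^ 3 * ν.f (P * (h * v)) := by
    intro v hv
    have hp0 := ν.nonneg (P * v)
    have h1 := hδ (P * v) (hPP v)
    have h2 : ν.f (P * (h * (P * v))) - ν.f (P * (h * ((1 - P) * v))) ≤ ν.f (P * (h * v)) := by
      conv_rhs => rw [hsplit v, mul_add, mul_add]
      exact ν.add_ge _ _
    have h3 := hE2 ((1 - P) * v)
    have h4 : E * (E ^ 2 * ν.f ((1 - P) * v)) ≤ 1 / 10 * ν.f (P * v) := by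
      rw [← hεE]
      calc _ = E ^ 3 * ν.f ((1 - P) * v) := by ring
        _ ≤ E ^ 3 * (ε * ν.f (P * v)) := by gcongr
        _ = _ := by ring
    have h5 : ν.f (P * v) ≤ 2 * E * ν.f (P * (h * v)) := by
      have := mul_le_mul_of_nonneg_left h2 hE0.le
      have := mul_le_mul_of_nonneg_left h3 hE0.le
      nlinarith
    have h6 : ν.f ((1 - P) * (h * v)) ≤ E ^ 2 * ν.f v := hE2' v
    have h7 : ν.f v ≤ 2 * ν.f (P * v) := by
      have e := ν.add_le (P * v) ((1 - P) * v)
      rw [← hsplit v] at e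
      nlinarith
    calc _ ≤ E ^ 2 * ν.f v := h6
      _ ≤ E ^ 2 * (2 * (2 * E * ν.f (P * (h * v)))) := by gcongr; linarith
      _ = _ := by ring
  have cw : ∀ w ∈ Submonoid.closure {x, h * x}, ∀ v, ν.f ((1 - P) * v) ≤ 4 * E ^ 3 * ν.f (P * v) →
      ν.f ((1 - P) * (w * v)) ≤ 4 * E ^ 3 * ν.f (P * (w * v)) := by
    intro w hw
    induction hw using Submonoid.closure_induction with
    | mem y hy =>
      rcases hy with rfl | hy
      · intro v hv; exact cε _ (cx v hv)
      · rw [Set.mem_singleton_iff] at hy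
        subst hy
        intro v hv
        rw [mul_assoc]
        exact ch _ (cx v hv)
    | one => intro v hv; simpa using hv
    | mul y z _ _ h1 h2 => intro v hv; rw [mul_assoc]; exact h1 _ (h2 v hv)
  have uw : ∀ w ∈ Submonoid.closure {x, h * x}, IsUnit w := by
    intro w hw
    induction hw using Submonoid.closure_induction with
    | mem y hy =>
      rcases hy with rfl | hy
      · exact hx
      · rw [Set.mem_singleton_iff] at hy
        subst hy
        exact hh.mul hx
    | one => exact isUnit_one
    | mul y z _ _ h1 h2 => exact h1.mul h2
  intro w hw w' hw' heq
  obtain ⟨g, hg⟩ : ∃ g, g = x * w' := ⟨_, rfl⟩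
  have hgu : IsUnit g := hg ▸ hx.mul (uw w' hw')
  have cg : ∀ v, P * v = v → ν.f ((1 - P) * (g * v)) ≤ ε * ν.f (P * (g * v)) := by
    intro v hv
    rw [hg, mul_assoc]
    apply cx
    apply cw w' hw'
    rw [sub_mul, hv]
    simp only [one_mul, sub_self, ν.zero]
    have := ν.nonneg v; positivity
  have chg : ∀ v, P * v = v → ν.f ((1 - P) * (h * (g * v))) ≤ ε * ν.f (P * (h * (g * v))) := by
    intro v hv
    have e : h * (g * v) = x * (w * v) := by
      rw [hg, ← mul_assoc, ← mul_assoc, ← heq, mul_assoc]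
    rw [e]
    apply cx
    apply cw w hw
    rw [sub_mul, hv]
    simp only [one_mul, sub_self, ν.zero]
    have := ν.nonneg v; positivity
  let N : Mat n := P * g * P + (1 - P)
  let Nl : Mat n →ₗ[ℂ] Mat n := LinearMap.mulLeft ℂ N
  have hPNv : ∀ v, P * (N * v) = P * (g * (P * v)) := by
    intro v
    simp only [N, add_mul, mul_add, hPQ, add_zero, mul_assoc, hPP]
  have hQNv : ∀ v, (1 - P) * (N * v) = (1 - P) * v := by
    intro v
    simp only [N, add_mul, mul_add, mul_assoc, sub_mul, mul_sub, hPP, one_mul, sub_self]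
    abel
  have hinj : Function.Injective Nl := by
    rw [← LinearMap.ker_eq_bot, LinearMap.ker_eq_bot']
    intro v hv
    have hv' : N * v = 0 := hv
    have h1 := hPNv v
    have h2 := hQNv v
    rw [hv', mul_zero] at h1 h2
    have h3 : P * v = v := by
      have := hsplit v
      rw [← h2, add_zero] at this
      exact this.symm
    rw [h3] at h1
    have h4 := cg v h3
    rw [← h1, ν.zero, mul_zero] at h4
    have h5 := ν.eq_zero h4
    have h6 : g * v = 0 := by rw [hsplit (g * v), h5, ← h1, add_zero]
    exact hgu.mul_right_eq_zero.mp h6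
  obtain ⟨v, hv⟩ := (LinearMap.injective_iff_surjective.mp hinj) P
  have hv' : N * v = P := hv
  have hv1 : P * v = v := by
    have h2 := hQNv v
    rw [hv', sub_mul, hP, one_mul, sub_self] at h2
    have := hsplit v
    rw [← h2, add_zero] at this
    exact this.symm
  have hv2 : P * (g * v) = P := by
    have h1 := hPNv v
    rw [hv', hP, hv1] at h1
    exact h1.symm
  have h1 := cg v hv1
  have h2 := chg v hv1
  obtain ⟨q, hq⟩ : ∃ q, q = (1 - P) * (g * v) := ⟨_, rfl⟩
  rw [hv2, ← hq] at h1
  have hgv : g * v = P + q := by rw [hsplit (g * v), hv2, hq]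
  rw [hgv] at h2
  have h3 : ν.f ((1 - P) * (h * P)) - ν.f ((1 - P) * (h * q)) ≤ ν.f ((1 - P) * (h * (P + q))) := by
    rw [mul_add, mul_add]; exact ν.add_ge _ _
  have h4 := hE2' q
  have h5 := hE2 (P + q)
  have h6 := ν.add_le P q
  have hP1 := ν.pos P hP0
  have h7 : ν.f ((1 - P) * (h * P)) ≤ 3 * E ^ 2 * ε * ν.f P := by
    have a1 : ν.f (P * (h * (P + q))) ≤ E ^ 2 * (2 * ν.f P) := by
      refine h5.trans ?_
      gcongr
      nlinarith
    have a2 := mul_le_mul_of_nonneg_left a1 hε0.le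
    have a3 : E ^ 2 * ν.f q ≤ E ^ 2 * (ε * ν.f P) := by gcongr
    linarith
  have h8 := mul_le_mul_of_nonneg_left h7 hE0.le
  have h9 : E * (3 * E ^ 2 * ε * ν.f P) = 3 / 10 * ν.f P := by
    calc _ = 3 * (ε * E ^ 3) * ν.f P := by ring
      _ = _ := by rw [hεE]; ring
  linarith

lemma exists_eig {n : ℕ} (x : Mat n) {c : ℂ} (hc : c ∈ x.charpoly.roots) : ∃ V : Mat n, V ≠ 0 ∧ x * V = c • V := by
  have h1 : x.charpoly.IsRoot c := (Polynomial.mem_roots'.mp hc).2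
  have h2 : (Matrix.scalar (Fin n) c - x).det = 0 := by
    rw [← Matrix.eval_charpoly]; exact h1
  obtain ⟨v, hv, hv0⟩ := Matrix.exists_mulVec_eq_zero_iff.mpr h2
  set V : Mat n := Matrix.of fun i _ => v i with hV
  have hV0 : V ≠ 0 := by
    intro h
    apply hv
    ext i
    have := congrFun (congrFun h i) i
    simpa [hV] using this
  refine ⟨V, hV0, ?_⟩
  ext i j
  have := congrFun hv0 i
  simp only [Matrix.sub_mulVec, Pi.sub_apply, Pi.zero_apply, Matrix.scalar_apply,
    Matrix.mulVec_diagonal] at this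
  have h3 : (x.mulVec v) i = c * v i := by linear_combination -this
  simpa [hV, Matrix.mul_apply, Matrix.mulVec, dotProduct] using h3

lemma prod_eig {n : ℕ} (x V : Mat n) (c : ℂ) (h : x * V = c • V) (s : Multiset ℂ) :
    aeval x (s.map fun d => X - C d).prod * V = (s.map fun d => c - d).prod • V := by
  induction s using Multiset.induction with
  | empty => simp
  | cons d s ih =>
    rw [Multiset.map_cons, Multiset.prod_cons, map_mul, mul_assoc, ih, mul_smul_comm,
      ANorm.sub_smul_mul, h, ← sub_smul, smul_smul, Multiset.map_cons, Multiset.prod_cons, mul_comm]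

lemma prod_coprime (s t : Multiset ℂ) (h : ∀ c ∈ s, ∀ d ∈ t, c ≠ d) :
    IsCoprime (s.map fun c => X - C c).prod (t.map fun c => X - C c).prod := by
  induction s using Multiset.induction with
  | empty => simpa using isCoprime_one_left
  | cons c s ih =>
    rw [Multiset.map_cons, Multiset.prod_cons]
    refine IsCoprime.mul_left ?_ (ih fun c hc => h c (Multiset.mem_cons_of_mem hc))
    have hc := h c (Multiset.mem_cons_self _ _)
    clear ih h
    induction t using Multiset.induction with
    | empty => simpa using isCoprime_one_right
    | cons d t ih =>
      rw [Multiset.map_cons, Multiset.prod_cons]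
      refine IsCoprime.mul_right ?_ (ih fun c hc' => hc c (Multiset.mem_cons_of_mem hc'))
      exact isCoprime_X_sub_C_of_isUnit_sub
        (sub_ne_zero.mpr (hc d (Multiset.mem_cons_self _ _))).isUnit

end UEG

end

section
namespace UEG
open Polynomial

/-- spectral projection with growth estimates -/
lemma spectral {n : ℕ} (ν : ANorm n) (a a' : Mat n) (h1 : a' * a = 1) (h2 : a * a' = 1)
    {M α β Q : ℝ} (hβ : 1 ≤ β) (hαβ : β < α) (hM : 1 ≤ M) (ha : ν.f a ≤ M) (ha' : ν.f a' ≤ M)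
    (hQ : (2 + M ^ 2) ^ n ≤ Q)
    (hgap : ∀ c ∈ a.charpoly.roots, ‖c‖ ≤ β ∨ α ≤ ‖c‖)
    (hsm : ∃ c ∈ a.charpoly.roots, ‖c‖ ≤ β) (hbig : ∃ c ∈ a.charpoly.roots, α ≤ ‖c‖) :
    ∃ P : Mat n, P * P = P ∧ P ≠ 0 ∧ P ≠ 1 ∧ a * P = P * a ∧
      (∀ z, P * z = 0 → ∀ m, ν.f (a ^ m * z) ≤ (2 * β) ^ m * Q * ν.f z) ∧
      (∀ p, P * p = p → ∀ m, (α / 2) ^ m * ν.f p ≤ Q * ν.f (a ^ m * p)) := by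
  classical
  set s := a.charpoly.roots.filter (fun c => ‖c‖ ≤ β) with hs
  set t := a.charpoly.roots.filter (fun c => ¬ ‖c‖ ≤ β) with ht
  have hst : s + t = a.charpoly.roots := Multiset.filter_add_not _ _
  have hα : 0 < α := by linarith
  have hsβ : ∀ c ∈ s, ‖c‖ ≤ β := fun c hc => (Multiset.mem_filter.mp hc).2
  have htα : ∀ c ∈ t, α ≤ ‖c‖ := fun c hc => by
    obtain ⟨h, h'⟩ := Multiset.mem_filter.mp hc
    exact (hgap c h).resolve_left h'
  have hcard : s.card + t.card = n := by
    rw [← Multiset.card_add, hst, ANorm.card_roots]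
  obtain ⟨c₁, hc₁, hc₁β⟩ := hsm
  obtain ⟨c₂, hc₂, hc₂α⟩ := hbig
  have hc₁s : c₁ ∈ s := Multiset.mem_filter.mpr ⟨hc₁, hc₁β⟩
  have hc₂t : c₂ ∈ t := Multiset.mem_filter.mpr ⟨hc₂, by linarith⟩
  have hαM : α ≤ M := hc₂α.trans ((ν.root_le a hc₂).trans ha)
  have hdis : ∀ c ∈ t, ∀ d ∈ s, c ≠ d := by
    rintro c hc d hd rfl
    have := hsβ c hd; have := htα c hc; linarith
  set u := (t.map fun c => X - C c).prod with hu
  set q := (s.map fun c => X - C c).prod with hq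
  obtain ⟨A, B, hAB⟩ := prod_coprime t s hdis
  rw [← hu, ← hq] at hAB
  have huq : aeval a (u * q) = 0 := by
    have : u * q = a.charpoly := by
      rw [← ANorm.charpoly_eq, ← hst, Multiset.map_add, Multiset.prod_add, hu, hq, mul_comm]
    rw [this, Matrix.aeval_self_charpoly]
  set P := aeval a (B * q) with hP
  have hP' : 1 - P = aeval a (A * u) := by
    rw [hP, sub_eq_iff_eq_add, ← map_add, hAB, map_one]
  have huP : aeval a u * P = 0 := by
    rw [hP, ← map_mul, show u * (B * q) = B * (u * q) by ring, map_mul, huq, mul_zero]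
  have hqP : aeval a q * (1 - P) = 0 := by
    rw [hP', ← map_mul, show q * (A * u) = A * (u * q) by ring, map_mul, huq, mul_zero]
  have hPP : P * (1 - P) = 0 := by
    have e : P = aeval a B * aeval a q := by rw [hP, map_mul]
    calc P * (1 - P) = aeval a B * (aeval a q * (1 - P)) := by
          rw [← mul_assoc, ← e]
      _ = 0 := by rw [hqP, mul_zero]
  have hPP' : P * P = P := by
    rw [mul_sub, mul_one, sub_eq_zero] at hPP; exact hPP.symm
  have hMM : M ≤ M ^ 2 := by nlinarith
  have hb1 : (1 : ℝ) ≤ 2 + M ^ 2 := by nlinarith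
  have hprod : ∀ (c : ℂ) (r : Multiset ℂ), (∀ d ∈ r, c ≠ d) → (r.map fun d => c - d).prod ≠ 0 := by
    intro c r hr h0
    rw [Multiset.prod_eq_zero_iff, Multiset.mem_map] at h0
    obtain ⟨d, hd, hd'⟩ := h0
    exact hr d hd (sub_eq_zero.mp hd')
  refine ⟨P, hPP', ?_, ?_, ?_, ?_, ?_⟩
  · intro h0
    rw [h0, sub_zero, mul_one] at hqP
    obtain ⟨V, hV, hV'⟩ := exists_eig a hc₂
    have := prod_eig a V c₂ hV' s
    rw [← hq, hqP, zero_mul] at this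
    exact (smul_ne_zero (hprod c₂ s (hdis c₂ hc₂t)) hV) this.symm
  · intro h0
    rw [h0, mul_one] at huP
    obtain ⟨V, hV, hV'⟩ := exists_eig a hc₁
    have := prod_eig a V c₁ hV' t
    rw [← hu, huP, zero_mul] at this
    exact (smul_ne_zero (hprod c₁ t (fun d hd => (hdis d hd c₁ hc₁s).symm)) hV) this.symm
  · rw [hP]
    conv_lhs => rw [← aeval_X (R := ℂ) a]
    conv_rhs => rw [← aeval_X (R := ℂ) a]
    simp only [aeval_X]
    have : aeval a (X * (B * q)) = aeval a ((B * q) * X) := by rw [mul_comm]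
    simpa only [map_mul, aeval_X] using this
  · intro z hz m
    have hz' : aeval a q * z = 0 := by
      have : z = (1 - P) * z := by rw [sub_mul, hz]; simp
      rw [this, ← mul_assoc, hqP, zero_mul]
    refine (ν.pow_bound a (by linarith) ha s hsβ z hz' m).trans ?_
    have hz0 := ν.nonneg z
    gcongr
    calc (2 + M / β) ^ s.card ≤ (2 + M ^ 2) ^ s.card := by
          gcongr
          exact (div_le_self (by linarith) hβ).trans hMM
      _ ≤ (2 + M ^ 2) ^ n := pow_le_pow_right₀ hb1 (by omega)
      _ ≤ Q := hQ
  · intro p hp m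
    have hp' : aeval a u * p = 0 := by
      rw [← hp, ← mul_assoc, huP, zero_mul]
    have hcomm : Commute a a' := by rw [Commute, SemiconjBy, h1, h2]
    obtain ⟨k, j, e⟩ := inv_prod a a' h1 h2 t (fun c hc h0 => by
      have := htα c hc
      rw [h0, norm_zero] at this; linarith)
    have hz : aeval a' ((t.map fun c => c⁻¹).map fun c => X - C c).prod * (a ^ m * p) = 0 := by
      rw [Multiset.map_map]
      simp only [Function.comp_def]
      rw [e, ← hu, smul_mul_assoc, mul_assoc]
      have : aeval a u * (a ^ m * p) = a ^ m * (aeval a u * p) := by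
        rw [← mul_assoc, ← mul_assoc]
        have : aeval a (u * X ^ m) = aeval a (X ^ m * u) := by rw [mul_comm]
        simp only [map_mul, map_pow, aeval_X] at this
        rw [this]
      rw [this, hp', mul_zero, mul_zero, smul_zero]
    have hb := ν.pow_bound a' (β := 1 / α) (by positivity) ha' (t.map fun c => c⁻¹) (by
      intro c hc
      obtain ⟨d, hd, rfl⟩ := Multiset.mem_map.mp hc
      rw [norm_inv, one_div]
      exact inv_anti₀ hα (htα d hd)) (a ^ m * p) hz m
    have hcancel : a' ^ m * (a ^ m * p) = p := by
      rw [← mul_assoc, ← hcomm.symm.mul_pow, h1, one_pow, one_mul]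
    rw [hcancel, Multiset.card_map] at hb
    have hz0 := ν.nonneg (a ^ m * p)
    have hb2 : ν.f p ≤ (2 * (1 / α)) ^ m * Q * ν.f (a ^ m * p) := by
      refine hb.trans ?_
      gcongr
      calc (2 + M / (1 / α)) ^ t.card ≤ (2 + M ^ 2) ^ t.card := by
            gcongr
            rw [div_div_eq_mul_div, div_one]; nlinarith
        _ ≤ (2 + M ^ 2) ^ n := pow_le_pow_right₀ hb1 (by omega)
        _ ≤ Q := hQ
    calc (α / 2) ^ m * ν.f p ≤ (α / 2) ^ m * ((2 * (1 / α)) ^ m * Q * ν.f (a ^ m * p)) := by gcongr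
      _ = ((α / 2) * (2 * (1 / α))) ^ m * (Q * ν.f (a ^ m * p)) := by
        rw [mul_pow (α / 2)]; ring
      _ = _ := by
        rw [show (α / 2) * (2 * (1 / α)) = 1 by field_simp]; simp

/-- projection bound -/
lemma proj_bound {n : ℕ} (ν : ANorm n) (a P : Mat n) {M α β Q θ : ℝ} (hβ : 1 ≤ β) (hM : 0 ≤ M)
    (ha : ν.f a ≤ M) (hQ1 : 1 ≤ Q) (hPP : P * P = P) (hθα : α / 2 = θ * (2 * β))
    (hs : ∀ z, P * z = 0 → ∀ m, ν.f (a ^ m * z) ≤ (2 * β) ^ m * Q * ν.f z)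
    (hb : ∀ p, P * p = p → ∀ m, (α / 2) ^ m * ν.f p ≤ Q * ν.f (a ^ m * p))
    (m : ℕ) (hm : 2 * Q ^ 2 ≤ θ ^ m) (v : Mat n) :
    ν.f (P * v) ≤ (M ^ m + Q) * ν.f v := by
  set p := P * v with hp
  set q := (1 - P) * v with hq
  have hv : v = p + q := by rw [hp, hq, sub_mul]; simp
  have hPp : P * p = p := by rw [hp, ← mul_assoc, hPP]
  have hPq : P * q = 0 := by rw [hq, ← mul_assoc, mul_sub, hPP]; simp
  have e1 := hb p hPp m
  have e2 := hs q hPq m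
  have e3 : ν.f q ≤ ν.f v + ν.f p := by
    have : q = v - p := by rw [hv]; abel
    rw [this]; exact ν.sub_le _ _
  have e4 : ν.f (a ^ m * p) ≤ M ^ m * ν.f v + ν.f (a ^ m * q) := by
    have : a ^ m * p = a ^ m * v - a ^ m * q := by rw [hv, mul_add]; abel
    rw [this]
    exact (ν.sub_le _ _).trans (add_le_add_left (ν.pow_mul_le a v ha m) _)
  have hv0 := ν.nonneg v
  have hp0 := ν.nonneg p
  have hb1 : 1 ≤ (2 * β) ^ m := one_le_pow₀ (by linarith)
  have hMm : 0 ≤ M ^ m := by positivity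
  set T := (2 * β) ^ m with hT
  rw [hθα, mul_pow, ← hT] at e1
  have e5 : θ ^ m * T * ν.f p ≤ Q * (M ^ m * ν.f v + T * Q * (ν.f v + ν.f p)) := by
    refine e1.trans ?_
    gcongr
    refine e4.trans ?_
    gcongr
    refine e2.trans ?_
    gcongr
  have e6 : (T * Q) * (2 * Q * ν.f p) ≤ (T * Q) * (M ^ m * ν.f v + Q * (ν.f v + ν.f p)) := by
    calc (T * Q) * (2 * Q * ν.f p) = (2 * Q ^ 2) * T * ν.f p := by ring
      _ ≤ θ ^ m * T * ν.f p := by gcongr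
      _ ≤ _ := e5
      _ = Q * (1 * (M ^ m * ν.f v) + T * Q * (ν.f v + ν.f p)) := by ring
      _ ≤ Q * (T * (M ^ m * ν.f v) + T * Q * (ν.f v + ν.f p)) := by gcongr
      _ = _ := by ring
  have e7 := le_of_mul_le_mul_left e6 (by positivity)
  have e8 : Q * ν.f p ≤ Q * ((M ^ m + Q) * ν.f v) := by
    have : (M ^ m + Q) * ν.f v ≤ Q * ((M ^ m + Q) * ν.f v) := 
      le_mul_of_one_le_left (by positivity) hQ1
    linarith
  exact le_of_mul_le_mul_left e8 (by linarith)

/-- gap in the spectrum -/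
lemma gap {n : ℕ} (a : Mat n) (hdet : ‖a.det‖ = 1) {t : ℝ} (ht : 1 < t) (hn : 0 < n)
    (htr : n * t ^ n ≤ ‖a.trace‖) :
    ∃ k : ℕ, k < n ∧ (∀ c ∈ a.charpoly.roots, ‖c‖ ≤ t ^ k ∨ t ^ (k + 1) ≤ ‖c‖) ∧
      (∃ c ∈ a.charpoly.roots, ‖c‖ ≤ t ^ k) ∧ (∃ c ∈ a.charpoly.roots, t ^ (k + 1) ≤ ‖c‖) := by
  classical
  have hcard := ANorm.card_roots a
  obtain ⟨b, hb, hbt⟩ : ∃ b ∈ a.charpoly.roots, t ^ n ≤ ‖b‖ := by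
    by_contra hcon
    push Not at hcon
    have : ∃ B < t ^ n, ∀ c ∈ a.charpoly.roots, ‖c‖ ≤ B := by
      have hne : (a.charpoly.roots.toFinset.image fun c => ‖c‖).Nonempty := by
        rw [Finset.image_nonempty, Multiset.toFinset_nonempty]
        intro h0; rw [h0] at hcard; simp at hcard; omega
      refine ⟨Finset.max' _ hne, ?_, ?_⟩
      · rw [Finset.max'_lt_iff]
        intro y hy
        obtain ⟨c, hc, rfl⟩ := Finset.mem_image.mp hy
        exact hcon c (Multiset.mem_toFinset.mp hc)
      · intro c hc
        exact Finset.le_max' _ _ (Finset.mem_image_of_mem _ (Multiset.mem_toFinset.mpr hc))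
    obtain ⟨B, hB, hB'⟩ := this
    have := ANorm.sum_le _ hB'
    rw [← ANorm.trace_eq, hcard] at this
    have hn' : (0 : ℝ) < n := by exact_mod_cast hn
    have := mul_lt_mul_of_pos_left hB hn'
    linarith
  have hex : ∃ k : ℕ, k < n ∧ ∀ c ∈ a.charpoly.roots, ‖c‖ ≤ t ^ k ∨ t ^ (k + 1) ≤ ‖c‖ := by
    by_contra hcon
    push Not at hcon
    choose f hf using hcon
    let g : Fin n → ℂ := fun k => f k k.2
    have hg : Function.Injective g := by
      have key : ∀ i j : Fin n, i < j → g i ≠ g j := by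
        intro i j hij h
        have h1 := (hf i i.2).2.2
        have h2 := (hf j j.2).2.1
        have h3 : f i i.2 = f j j.2 := h
        rw [h3] at h1
        have : t ^ ((i : ℕ) + 1) ≤ t ^ (j : ℕ) := pow_le_pow_right₀ ht.le hij
        linarith
      intro i j h
      rcases lt_trichotomy i j with h' | h' | h'
      · exact absurd h (key i j h')
      · exact h'
      · exact absurd h.symm (key j i h')
    have hsub : Finset.univ.image g ⊆ a.charpoly.roots.toFinset.erase b := by
      intro c hc
      obtain ⟨k, -, rfl⟩ := Finset.mem_image.mp hc
      refine Finset.mem_erase.mpr ⟨?_, Multiset.mem_toFinset.mpr (hf k k.2).1⟩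
      intro h
      have h1 := (hf k k.2).2.2
      have h3 : f k k.2 = b := h
      rw [h3] at h1
      have : t ^ ((k : ℕ) + 1) ≤ t ^ n := pow_le_pow_right₀ ht.le k.2
      linarith
    have h1 := Finset.card_le_card hsub
    rw [Finset.card_image_of_injective _ hg, Finset.card_univ, Fintype.card_fin,
      Finset.card_erase_of_mem (Multiset.mem_toFinset.mpr hb)] at h1
    have h2 := Multiset.toFinset_card_le a.charpoly.roots
    omega
  obtain ⟨k, hk, hkg⟩ := hex
  refine ⟨k, hk, hkg, ?_, b, hb, (pow_le_pow_right₀ ht.le hk).trans hbt⟩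
  by_contra hcon
  push Not at hcon
  have h1 : ∀ c ∈ a.charpoly.roots, ‖c⁻¹‖ ≤ t⁻¹ := by
    intro c hc
    rw [norm_inv]
    apply inv_anti₀ (by linarith)
    have := (hkg c hc).resolve_left (by have := hcon c hc; linarith)
    refine le_trans ?_ this
    exact le_self_pow₀ ht.le (by omega)
  have h2 := ANorm.prod_le (a.charpoly.roots.map fun c => c⁻¹) (B := t⁻¹) (by
    intro c hc
    obtain ⟨d, hd, rfl⟩ := Multiset.mem_map.mp hc
    exact h1 d hd)
  rw [Multiset.prod_map_inv, Multiset.map_id', ← ANorm.det_eq, norm_inv, hdet, Multiset.card_map, hcard] at h2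
  have h3 : (t⁻¹) ^ n < 1 := pow_lt_one₀ (by positivity) (inv_lt_one_of_one_lt₀ ht) (by omega)
  simp at h2 h3
  linarith

end UEG

end

section
namespace UEG

/-- coordinate functions on matrices, including the constant one -/
def crd {n : ℕ} (o : Option (Fin n × Fin n)) (M : Mat n) : ℂ :=
  match o with
  | none => 1
  | some p => M p.1 p.2

abbrev Idx (n d : ℕ) := Fin d → Option (Fin n × Fin n)

/-- degree `d` Veronese type map -/
def phi {n : ℕ} (d : ℕ) (M : Mat n) : Idx n d → ℂ := fun I => ∏ k, crd (I k) M

def Aff {n : ℕ} (F : Mat n → ℂ) : Prop := ∃ c : Option (Fin n × Fin n) → ℂ, ∀ M, F M = ∑ o, c o * crd o M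

def PolyDeg {n : ℕ} (d : ℕ) (F : Mat n → ℂ) : Prop := ∃ c : Idx n d → ℂ, ∀ M, F M = ∑ I, c I * phi d M I

namespace Aff
variable {n : ℕ}

lemma const (c : ℂ) : Aff (fun _ : Mat n => c) := by
  classical
  refine ⟨fun o => if o = none then c else 0, fun M => ?_⟩
  simp [crd]

lemma entry (i j : Fin n) : Aff (fun M : Mat n => M i j) := by
  classical
  refine ⟨fun o => if o = some (i, j) then 1 else 0, fun M => ?_⟩
  simp [crd]

lemma crd (o : Option (Fin n × Fin n)) : Aff (crd o) := by
  cases o with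
  | none => exact const 1
  | some p => exact entry p.1 p.2

lemma add {F G : Mat n → ℂ} (hF : Aff F) (hG : Aff G) : Aff (fun M => F M + G M) := by
  obtain ⟨c, hc⟩ := hF
  obtain ⟨d, hd⟩ := hG
  refine ⟨fun o => c o + d o, fun M => ?_⟩
  simp only [hc, hd, ← Finset.sum_add_distrib, add_mul]

lemma smul {F : Mat n → ℂ} (a : ℂ) (hF : Aff F) : Aff (fun M => a * F M) := by
  obtain ⟨c, hc⟩ := hF
  refine ⟨fun o => a * c o, fun M => ?_⟩
  simp only [hc, Finset.mul_sum, mul_assoc]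

lemma sum {ι : Type*} (s : Finset ι) {F : ι → Mat n → ℂ} (hF : ∀ i, Aff (F i)) :
    Aff (fun M => ∑ i ∈ s, F i M) := by
  classical
  induction s using Finset.induction_on with
  | empty => simpa using const 0
  | insert a s ha ih =>
    simp only [Finset.sum_insert ha]
    exact (hF a).add ih

lemma entry_mul (A B : Mat n) (i j : Fin n) : Aff (fun M : Mat n => (A * M * B) i j) := by
  have : (fun M : Mat n => (A * M * B) i j) = fun M => ∑ l, ∑ k, (A i k * B l j) * M k l := by
    funext M
    simp only [Matrix.mul_apply, Finset.sum_mul]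
    refine Finset.sum_congr rfl fun l _ => Finset.sum_congr rfl fun k _ => by ring
  rw [this]
  exact sum _ fun l => sum _ fun k => (entry k l).smul _

lemma crd_mul (A B : Mat n) (o : Option (Fin n × Fin n)) : Aff (fun M : Mat n => UEG.crd o (A * M * B)) := by
  cases o with
  | none => exact const 1
  | some p => exact entry_mul A B p.1 p.2

lemma trace_mul (A B : Mat n) : Aff (fun M : Mat n => (A * M * B).trace) := by
  simp only [Matrix.trace, Matrix.diag]
  exact sum _ fun i => entry_mul A B i i

end Aff

namespace PolyDeg
variable {n : ℕ}

lemma prod_aff {d : ℕ} (F : Fin d → Mat n → ℂ) (hF : ∀ k, Aff (F k)) : PolyDeg d (fun M => ∏ k, F k M) := by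
  classical
  choose c hc using hF
  refine ⟨fun I => ∏ k, c k (I k), fun M => ?_⟩
  simp only [hc, phi, ← Finset.prod_mul_distrib]
  rw [Finset.prod_univ_sum, Fintype.piFinset_univ]

lemma smul {d : ℕ} {F : Mat n → ℂ} (a : ℂ) (hF : PolyDeg d F) : PolyDeg d (fun M => a * F M) := by
  obtain ⟨c, hc⟩ := hF
  refine ⟨fun o => a * c o, fun M => ?_⟩
  simp only [hc, Finset.mul_sum, mul_assoc]

lemma add {d : ℕ} {F G : Mat n → ℂ} (hF : PolyDeg d F) (hG : PolyDeg d G) : PolyDeg d (fun M => F M + G M) := by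
  obtain ⟨c, hc⟩ := hF
  obtain ⟨e, he⟩ := hG
  refine ⟨fun o => c o + e o, fun M => ?_⟩
  simp only [hc, he, ← Finset.sum_add_distrib, add_mul]

lemma sum {d : ℕ} {ι : Type*} (s : Finset ι) {F : ι → Mat n → ℂ} (hF : ∀ i, PolyDeg d (F i)) :
    PolyDeg d (fun M => ∑ i ∈ s, F i M) := by
  classical
  induction s using Finset.induction_on with
  | empty => exact ⟨0, by simp⟩
  | insert a s ha ih =>
    simp only [Finset.sum_insert ha]
    exact (hF a).add ih

lemma translate {d : ℕ} {F : Mat n → ℂ} (hF : PolyDeg d F) (A B : Mat n) :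
    PolyDeg d (fun M => F (A * M * B)) := by
  obtain ⟨c, hc⟩ := hF
  simp only [hc]
  refine sum _ fun I => smul _ ?_
  simp only [phi]
  exact prod_aff _ fun k => Aff.crd_mul A B _

lemma det_mul {F : Fin n → Fin n → Mat n → ℂ} (hF : ∀ i j, Aff (F i j)) {G : Mat n → ℂ} (hG : Aff G) :
    PolyDeg (n + 1) (fun M => (Matrix.of fun i j => F i j M).det * G M) := by
  have : (fun M => (Matrix.of fun i j => F i j M).det * G M) =
      fun M => ∑ σ : Equiv.Perm (Fin n), ((Equiv.Perm.sign σ : ℤ) : ℂ) *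
        ∏ k : Fin (n + 1), (Fin.cons G (fun i => F (σ i) i) : Fin (n + 1) → Mat n → ℂ) k M := by
    funext M
    rw [Matrix.det_apply', Finset.sum_mul]
    refine Finset.sum_congr rfl fun σ _ => ?_
    rw [Fin.prod_univ_succ]
    simp only [Fin.cons_zero, Fin.cons_succ, Matrix.of_apply]
    ring
  rw [this]
  refine sum _ fun σ => smul _ (prod_aff _ fun k => ?_)
  refine Fin.cases ?_ (fun i => ?_) k
  · simpa using hG
  · simpa using hF _ _

/-- along an affine line a polynomial function is a one-variable polynomial -/
lemma line {d : ℕ} {F : Mat n → ℂ} (hF : PolyDeg d F) (A B : Mat n) :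
    ∃ p : Polynomial ℂ, ∀ t : ℂ, F (A + t • B) = p.eval t := by
  obtain ⟨c, hc⟩ := hF
  refine ⟨∑ I, Polynomial.C (c I) * ∏ k, (Polynomial.C (crd (I k) A) +
    Polynomial.X * Polynomial.C (crd (I k) (A + B) - crd (I k) A)), fun t => ?_⟩
  rw [hc]
  simp only [Polynomial.eval_finsetSum, Polynomial.eval_mul, Polynomial.eval_C,
    Polynomial.eval_prod, Polynomial.eval_add, Polynomial.eval_X, phi]
  refine Finset.sum_congr rfl fun I _ => ?_
  congr 1
  refine Finset.prod_congr rfl fun k _ => ?_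
  cases I k with
  | none => simp [UEG.crd]
  | some p => simp [UEG.crd]

end PolyDeg

lemma phi_dot {n : ℕ} (d : ℕ) (A B : Mat n) : ∑ I, phi d A I * phi d B.transpose I = (1 + (A * B).trace) ^ d := by
  classical
  have h1 : ∑ o, crd o A * crd o B.transpose = 1 + (A * B).trace := by
    rw [Fintype.sum_option]
    simp only [crd, one_mul, Matrix.trace, Matrix.diag, Matrix.mul_apply, Matrix.transpose_apply]
    rw [Fintype.sum_prod_type]
  have h2 : (∑ o, crd o A * crd o B.transpose) ^ d = ∏ _k : Fin d, ∑ o, crd o A * crd o B.transpose := by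
    simp
  rw [← h1, h2, Finset.prod_univ_sum, Fintype.piFinset_univ]
  simp only [phi, ← Finset.prod_mul_distrib]

/-! ### transvections over the complex numbers -/

/-- monoid generated by complex transvections -/
def TV (n : ℕ) : Submonoid (Mat n) :=
  Submonoid.closure {M | ∃ (i j : Fin n) (c : ℂ), i ≠ j ∧ M = Matrix.transvection i j c}

lemma zariski {n d : ℕ} (Γ : Submonoid (Mat n))
    (hΓ : ∀ (i j : Fin n) (k : ℤ), i ≠ j → Matrix.transvection i j (k : ℂ) ∈ Γ) {z : Mat n} (hz : z ∈ TV n) :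
    ∀ F : Mat n → ℂ, PolyDeg d F → (∀ γ ∈ Γ, F γ = 0) → ∀ γ ∈ Γ, F (z * γ) = 0 := by
  induction hz using Submonoid.closure_induction with
  | mem y hy =>
    obtain ⟨i, j, c, hij, rfl⟩ := hy
    intro F hF hFΓ γ hγ
    have hF' := hF.translate 1 γ
    simp only [one_mul] at hF'
    obtain ⟨p, hp⟩ := hF'.line 1 (Matrix.single i j 1)
    have ht : ∀ t : ℂ, Matrix.transvection i j t = 1 + t • Matrix.single i j (1 : ℂ) := by
      intro t; rw [Matrix.transvection, Matrix.smul_single]; simp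
    have hp0 : p = 0 := by
      apply Polynomial.eq_zero_of_infinite_isRoot
      apply Set.Infinite.mono (s := Set.range (fun k : ℤ => (k : ℂ)))
      · rintro _ ⟨k, rfl⟩
        show p.eval _ = 0
        rw [← hp, ← ht]
        exact hFΓ _ (Γ.mul_mem (hΓ i j k hij) hγ)
      · exact Set.infinite_range_of_injective Int.cast_injective
    rw [ht, hp, hp0, Polynomial.eval_zero]
  | one => intro F _ hF γ hγ; simpa using hF γ hγ
  | mul y z _ _ h1 h2 =>
    intro F hF hFΓ γ hγ
    have := h2 (fun M => F (y * M)) (by simpa using hF.translate y 1) (h1 F hF hFΓ) γ hγ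
    simpa [mul_assoc] using this

lemma tv_transvection {n : ℕ} {i j : Fin n} (hij : i ≠ j) (c : ℂ) : Matrix.transvection i j c ∈ TV n :=
  Submonoid.subset_closure ⟨i, j, c, hij, rfl⟩

lemma rank_one_mul {n : ℕ} (u u' f : Fin n → ℂ) (h : f ⬝ᵥ u' = 0) :
    (1 + Matrix.vecMulVec u f) * (1 + Matrix.vecMulVec u' f) = 1 + Matrix.vecMulVec (u + u') f := by
  rw [add_mul, mul_add, mul_add, Matrix.vecMulVec_mul_vecMulVec, h, Matrix.add_vecMulVec]
  simp
  abel

lemma tv_row {n : ℕ} (k : Fin n) (f : Fin n → ℂ) (hf : f k = 0) :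
    1 + Matrix.vecMulVec (Pi.single k 1) f ∈ TV n := by
  classical
  have key : ∀ s : Finset (Fin n), k ∉ s →
      1 + Matrix.vecMulVec (Pi.single k 1) (∑ j ∈ s, Pi.single j (f j)) ∈ TV n := by
    intro s
    induction s using Finset.induction_on with
    | empty => intro _; simpa using (TV n).one_mem
    | insert a s ha ih =>
      intro hk
      have hka : k ≠ a := fun h => hk (by simp [h])
      have hks : k ∉ s := fun h => hk (by simp [h])
      have h1 := (TV n).mul_mem (tv_transvection hka (f a)) (ih hks)
      convert h1 using 1
      have h2 : Matrix.transvection k a (f a) = 1 + Matrix.vecMulVec (Pi.single k 1) (Pi.single a (f a)) := by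
        rw [Matrix.transvection]
        congr 1
        ext x y
        simp only [Matrix.single_apply, Matrix.vecMulVec_apply, Pi.single_apply]
        by_cases hx : k = x <;> by_cases hy : a = y <;> simp [hx, hy, eq_comm]
      rw [h2, Finset.sum_insert ha, add_mul, mul_add, mul_add, Matrix.vecMulVec_mul_vecMulVec,
        Matrix.vecMulVec_add]
      simp [hka.symm]
      abel
  have h := key (Finset.univ.erase k) (by simp)
  convert h using 3
  have : f = ∑ j, Pi.single j (f j) := (Finset.univ_sum_single f).symm
  rw [← Finset.add_sum_erase _ _ (Finset.mem_univ k), hf] at this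
  simpa using this

lemma tv_conj {n : ℕ} {i k : Fin n} (hik : i ≠ k) (r : ℂ) {u f : Fin n → ℂ}
    (h : 1 + Matrix.vecMulVec u f ∈ TV n) :
    1 + Matrix.vecMulVec ((Matrix.transvection i k r).mulVec u)
      (Matrix.vecMul f (Matrix.transvection i k (-r))) ∈ TV n := by
  have h1 := (TV n).mul_mem ((TV n).mul_mem (tv_transvection hik r) h) (tv_transvection hik (-r))
  convert h1 using 1
  rw [mul_add, add_mul, mul_one, Matrix.transvection_mul_transvection_same _ _ hik, Matrix.mul_vecMulVec,
    Matrix.vecMulVec_mul]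
  simp

lemma tv_rank_one {n : ℕ} (w f : Fin n → ℂ) (h : f ⬝ᵥ w = 0) : 1 + Matrix.vecMulVec w f ∈ TV n := by
  classical
  by_cases hf : f = 0
  · rw [hf]; simpa using (TV n).one_mem
  obtain ⟨i, hi⟩ : ∃ i, f i ≠ 0 := by
    by_contra hcon
    push Not at hcon
    exact hf (funext hcon)
  set b : Fin n → Fin n → ℂ := fun k => Pi.single k 1 - Pi.single i (f k / f i) with hb
  have hfb : ∀ k, f ⬝ᵥ b k = 0 := by
    intro k
    simp only [hb, dotProduct_sub, dotProduct_single]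
    field_simp; ring
  have hbk : ∀ k, k ≠ i → ∀ c : ℂ, 1 + Matrix.vecMulVec (c • b k) f ∈ TV n := by
    intro k hk c
    by_cases hc : c = 0
    · rw [hc]; simpa using (TV n).one_mem
    have h1 := tv_row k (c • (f - Pi.single k (f k))) (by simp)
    have h2 := tv_conj hk.symm (-(f k / f i)) h1
    convert h2 using 2
    rw [Matrix.smul_vecMulVec, ← Matrix.vecMulVec_smul]
    congr 1
    · funext j
      simp only [hb, Matrix.transvection, Matrix.add_mulVec, Matrix.one_mulVec]
      simp [Matrix.mulVec_single, sub_eq_add_neg, Matrix.single_apply, Pi.single_apply, eq_comm]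
      by_cases hij : i = j <;> simp [hij]
    · funext j
      simp only [Matrix.transvection, Matrix.vecMul_add, Matrix.vecMul_one]
      simp [Matrix.vecMul, dotProduct, Matrix.single_apply, Pi.single_apply, eq_comm, hk, hk.symm]
      by_cases hj : k = j
      · subst hj; simp [hk]; field_simp
      · simp [hj, Ne.symm hj]
  have key : ∀ s : Finset (Fin n), i ∉ s → 1 + Matrix.vecMulVec (∑ k ∈ s, w k • b k) f ∈ TV n := by
    intro s
    induction s using Finset.induction_on with
    | empty => intro _; simpa using (TV n).one_mem
    | insert a s ha ih =>
      intro hk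
      have hka : a ≠ i := fun h => hk (by simp [h])
      have hks : i ∉ s := fun h => hk (by simp [h])
      rw [Finset.sum_insert ha, ← rank_one_mul _ _ _ (by
        rw [dotProduct_sum]
        refine Finset.sum_eq_zero fun k _ => by rw [dotProduct_smul, hfb, smul_zero])]
      exact (TV n).mul_mem (hbk a hka _) (ih hks)
  have hk := key (Finset.univ.erase i) (by simp)
  convert hk using 3
  have e1 : ∑ k, w k • b k = w := by
    have e2 : ∑ k, w k * (f k / f i) = 0 := by
      have : ∑ k, w k * (f k / f i) = (f ⬝ᵥ w) / f i := by
        rw [dotProduct, Finset.sum_div]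
        exact Finset.sum_congr rfl fun k _ => by ring
      rw [this, h, zero_div]
    funext j
    simp only [hb, Finset.sum_apply, Pi.smul_apply, Pi.sub_apply, smul_eq_mul, mul_sub,
      Finset.sum_sub_distrib, Pi.single_apply]
    by_cases hj : j = i
    · simp [hj, e2]
    · simp [hj]
  have e3 : b i = 0 := by
    simp [hb, div_self hi]
  rw [← Finset.add_sum_erase _ _ (Finset.mem_univ i), e3, smul_zero, zero_add] at e1
  exact e1.symm

/-- The Veronese vector of a unipotent rank one perturbation lies in the span. -/
lemma phi_mem_span {n d : ℕ} (Γ : Submonoid (Mat n))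
    (hΓ : ∀ (i j : Fin n) (k : ℤ), i ≠ j → Matrix.transvection i j (k : ℂ) ∈ Γ) {z : Mat n} (hz : z ∈ TV n) :
    phi d z ∈ Submodule.span ℂ (phi d '' (Γ : Set (Mat n))) := by
  classical
  by_contra hcon
  obtain ⟨f, hf, hker⟩ := Submodule.exists_le_ker_of_notMem hcon
  have hF : PolyDeg d (fun M => f (phi d M)) := by
    refine ⟨fun I => f (Pi.single I 1), fun M => ?_⟩
    have : phi d M = ∑ I, phi d M I • Pi.single I (1 : ℂ) := by
      funext J; simp [Finset.sum_apply, Pi.single_apply]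
    show f (phi d M) = _
    conv_lhs => rw [this]
    rw [map_sum]
    refine Finset.sum_congr rfl fun I _ => by rw [map_smul, smul_eq_mul, mul_comm]
  have := zariski Γ hΓ hz _ hF (fun γ hγ => hker (Submodule.subset_span ⟨γ, hγ, rfl⟩)) 1 Γ.one_mem
  rw [mul_one] at this
  exact hf this

end UEG

end

section
namespace UEG

/-- integrality of a matrix -/
def IsInt {n : ℕ} (M : Mat n) : Prop := ∃ A : Matrix (Fin n) (Fin n) ℤ, M = A.map (Int.cast : ℤ → ℂ)

open scoped ComplexOrder in
lemma gram {n d : ℕ} (Γ : Submonoid (Mat n)) (hIntg : ∀ γ ∈ Γ, IsInt γ) (htr : ∀ γ ∈ Γ, γ.transpose ∈ Γ)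
    (B : Set (Mat n)) (hB : B ⊆ Γ)
    (hspan : Submodule.span ℂ (phi d '' (Γ : Set (Mat n))) ≤ Submodule.span ℂ (phi d '' B)) :
    ∃ (D : ℕ) (h : Fin D → Mat n) (S : Matrix (Fin D) (Fin D) ℂ), D ≤ Fintype.card (Idx n d) ∧
      (∀ i, h i ∈ B) ∧
      (∀ b : ℝ, 1 ≤ b → (∀ i j, ‖(1 + (h i * h j).trace) ^ d‖ ≤ b) →
        ∀ i j, ‖S i j‖ ≤ (D.factorial : ℝ) * b ^ D) ∧
      ∀ X, phi d X ∈ Submodule.span ℂ (phi d '' (Γ : Set (Mat n))) → ∀ F, PolyDeg d F →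
        F X = ∑ i, (∑ j, (1 + (X * h j).trace) ^ d * S j i) * F (h i) := by
  classical
  obtain ⟨b₀, hb₀, hb₁, hli⟩ := exists_linearIndependent ℂ (phi d '' B)
  have hfin : b₀.Finite := hli.setFinite
  have : Fintype b₀ := hfin.fintype
  have hcardle : Fintype.card b₀ ≤ Fintype.card (Idx n d) := by
    have := hli.fintype_card_le_finrank
    simpa using this
  obtain ⟨D, hD⟩ : ∃ D, D = Fintype.card b₀ := ⟨_, rfl⟩
  let e : Fin D ≃ b₀ := (finCongr hD).trans (Fintype.equivFin b₀).symm
  have hex : ∀ i : Fin D, ∃ M ∈ B, phi d M = (e i : Idx n d → ℂ) := fun i => hb₀ (e i).2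
  choose h hhB hhe using hex
  have hliv : LinearIndependent ℂ (fun i => phi d (h i)) := by
    have := hli.comp e e.injective
    have e0 : (fun i => phi d (h i)) = (Subtype.val : b₀ → _) ∘ e := by funext i; exact hhe i
    rw [e0]
    exact this
  have hrange : Submodule.span ℂ (Set.range fun i => phi d (h i)) = Submodule.span ℂ (phi d '' (Γ : Set (Mat n))) := by
    have h1 : (Set.range fun i => phi d (h i)) = b₀ := by
      have : (fun i => phi d (h i)) = (Subtype.val : b₀ → _) ∘ e := by funext i; exact hhe i
      rw [this, Set.range_comp, e.surjective.range_eq, Set.image_univ, Subtype.range_coe]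
    rw [h1, hb₁]
    exact le_antisymm (Submodule.span_mono (Set.image_mono hB)) hspan
  set U := Submodule.span ℂ (phi d '' (Γ : Set (Mat n))) with hU
  let T : Matrix (Fin D) (Fin D) ℂ := Matrix.of fun i j => (1 + (h i * h j).trace) ^ d
  have hTdot : ∀ i j, T i j = ∑ I, phi d (h i) I * phi d (h j).transpose I := fun i j =>
    (phi_dot d _ _).symm
  let sw : Idx n d → Idx n d := fun I k => (I k).map Prod.swap
  have hsw : ∀ M : Mat n, ∀ I, phi d M.transpose I = phi d M (sw I) := by
    intro M I
    simp only [phi, sw]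
    refine Finset.prod_congr rfl fun k _ => ?_
    cases I k with
    | none => rfl
    | some p => rfl
  have hTdet : T.det ≠ 0 := by
    intro h0
    obtain ⟨c, hc, hcT⟩ := Matrix.exists_vecMul_eq_zero_iff.mpr h0
    set x : Idx n d → ℂ := ∑ i, c i • phi d (h i) with hx
    have hxI : ∀ I, x I = ∑ i, c i * phi d (h i) I := fun I => by simp [hx]
    have h1 : ∀ j, ∑ I, x I * phi d (h j) (sw I) = 0 := by
      intro j
      have := congrFun hcT j
      simp only [Matrix.vecMul, dotProduct, Pi.zero_apply, hTdot, Finset.mul_sum] at this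
      rw [Finset.sum_comm] at this
      rw [← this]
      refine Finset.sum_congr rfl fun I _ => ?_
      rw [hxI, Finset.sum_mul]
      refine Finset.sum_congr rfl fun i _ => ?_
      rw [hsw]; ring
    have h2 : ∀ y ∈ U, ∑ I, x I * y (sw I) = 0 := by
      intro y hy
      rw [← hrange] at hy
      induction hy using Submodule.span_induction with
      | mem y hy => obtain ⟨j, rfl⟩ := hy; exact h1 j
      | zero => simp
      | add y z _ _ h1 h2 => simp only [Pi.add_apply, mul_add, Finset.sum_add_distrib, h1, h2, add_zero]
      | smul a y _ h1 =>
        simp only [Pi.smul_apply, smul_eq_mul]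
        have : ∑ I, x I * (a * y (sw I)) = a * ∑ I, x I * y (sw I) := by
          rw [Finset.mul_sum]; refine Finset.sum_congr rfl fun I _ => by ring
        rw [this, h1, mul_zero]
    have h3 : ∀ i, ∑ I, x I * phi d (h i) I = 0 := by
      intro i
      have := h2 (phi d (h i).transpose) (Submodule.subset_span ⟨_, htr _ (hB (hhB i)), rfl⟩)
      rw [← this]
      refine Finset.sum_congr rfl fun I _ => ?_
      rw [← hsw, Matrix.transpose_transpose]
    have hreal : ∀ i I, star (phi d (h i) I) = phi d (h i) I := by
      intro i I
      obtain ⟨A, hA⟩ := hIntg _ (hB (hhB i))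
      simp only [phi, star_prod]
      refine Finset.prod_congr rfl fun k _ => ?_
      cases I k with
      | none => simp [crd]
      | some p => simp [crd, hA]
    have h4 : ∑ I, x I * star (x I) = 0 := by
      have : ∀ I, x I * star (x I) = ∑ i, star (c i) * (x I * phi d (h i) I) := by
        intro I
        conv_lhs => rw [hxI I, star_sum, ← hxI I, Finset.mul_sum]
        refine Finset.sum_congr rfl fun i _ => ?_
        rw [star_mul', hreal]; ring
      simp only [this]
      rw [Finset.sum_comm]
      refine Finset.sum_eq_zero fun i _ => ?_
      rw [← Finset.mul_sum, h3, mul_zero]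
    have h5 : x = 0 := by
      have := (dotProduct_self_star_eq_zero (v := x)).mp h4
      exact this
    exact hc (funext fun i => Fintype.linearIndependent_iff.mp hliv c (hx ▸ h5) i)
  have hdet1 : 1 ≤ ‖T.det‖ := by
    choose A hA using fun i => hIntg _ (hB (hhB i))
    let TZ : Matrix (Fin D) (Fin D) ℤ := Matrix.of fun i j => (1 + (A i * A j).trace) ^ d
    have hTZ : T = TZ.map (Int.castRingHom ℂ) := by
      ext i j
      simp only [T, TZ, Matrix.of_apply, Matrix.map_apply, hA, map_pow, map_add, map_one]
      congr 2
      simp [Matrix.trace, Matrix.mul_apply]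
    have : T.det = (TZ.det : ℂ) := by
      rw [hTZ, ← RingHom.mapMatrix_apply, ← RingHom.map_det]; simp
    rw [this] at hTdet ⊢
    have hne : TZ.det ≠ 0 := fun h => hTdet (by rw [h]; simp)
    rw [Complex.norm_intCast]
    exact_mod_cast Int.one_le_abs hne
  refine ⟨D, h, T⁻¹, hD ▸ hcardle, hhB, ?_, ?_⟩
  · let av : AbsoluteValue ℂ ℝ :=
      { toFun := norm, map_mul' := norm_mul, nonneg' := norm_nonneg,
        eq_zero' := fun _ => norm_eq_zero, add_le' := norm_add_le }
    intro b hb1 hb i j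
    rw [Matrix.inv_def, Matrix.smul_apply, Ring.inverse_eq_inv', smul_eq_mul, norm_mul, norm_inv]
    have h1 : ‖T.adjugate i j‖ ≤ (D.factorial : ℝ) * b ^ D := by
      rw [Matrix.adjugate_apply]
      have := Matrix.det_le (A := T.updateRow j (Pi.single i 1)) (abv := av) (x := b) (by
        intro k l
        show ‖(_ : ℂ)‖ ≤ b
        rw [Matrix.updateRow_apply]
        split_ifs
        · rw [Pi.single_apply]
          split_ifs <;> simp <;> linarith
        · exact hb k l)
      rw [Fintype.card_fin, nsmul_eq_mul] at this
      exact this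
    have h2 : ‖T.det‖⁻¹ ≤ 1 := inv_le_one_of_one_le₀ hdet1
    calc _ ≤ 1 * ‖T.adjugate i j‖ := by gcongr
      _ ≤ _ := by rw [one_mul]; exact h1
  · intro X hX F hF
    rw [← hrange, Submodule.mem_span_range_iff_exists_fun] at hX
    obtain ⟨c, hc⟩ := hX
    obtain ⟨f, hf⟩ := hF
    have hcT : Matrix.vecMul c T = fun j => (1 + (X * h j).trace) ^ d := by
      funext j
      rw [← phi_dot, ← hc]
      simp only [Matrix.vecMul, dotProduct, hTdot, Finset.sum_apply, Pi.smul_apply, smul_eq_mul,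
        Finset.mul_sum, Finset.sum_mul]
      rw [Finset.sum_comm]
      refine Finset.sum_congr rfl fun I _ => Finset.sum_congr rfl fun i _ => by ring
    have hc2 : c = Matrix.vecMul (fun j => (1 + (X * h j).trace) ^ d) T⁻¹ := by
      rw [← hcT, Matrix.vecMul_vecMul, Matrix.mul_nonsing_inv _ (Ne.isUnit hTdet), Matrix.vecMul_one]
    have hc3 : ∀ i, ∑ j, (1 + (X * h j).trace) ^ d * T⁻¹ j i = c i := by
      intro i
      conv_rhs => rw [hc2]
      rfl
    simp only [hc3, hf]
    rw [← hc]
    simp only [Finset.sum_apply, Pi.smul_apply, smul_eq_mul, Finset.mul_sum]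
    rw [Finset.sum_comm]
    refine Finset.sum_congr rfl fun I _ => Finset.sum_congr rfl fun i _ => by ring

end UEG

end

section
namespace UEG

/-- the parameter `θ` and its elementary estimates -/
lemma theta {n : ℕ} (hn : 2 ≤ n) {R : ℝ} (hR1 : (n : ℝ) ^ 2 ≤ R) (hR2 : (16 : ℝ) ^ (2 * n) ≤ R) :
    ∃ t : ℝ, 16 ≤ t ∧ n * t ^ n = R ∧ R ≤ (t / 4) ^ (4 * n) := by
  have hn0 : (0 : ℝ) < n := by positivity
  have hR0 : 0 < R := lt_of_lt_of_le (by positivity) hR1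
  obtain ⟨t, ht⟩ : ∃ t : ℝ, t = (R / n) ^ ((n : ℝ)⁻¹) := ⟨_, rfl⟩
  have htn : t ^ n = R / n := by
    rw [ht]; exact Real.rpow_inv_natCast_pow (by positivity) (by omega)
  have ht0 : 0 ≤ t := by rw [ht]; positivity
  have hsq : R ≤ (t ^ n) ^ 2 := by
    rw [htn, div_pow, le_div_iff₀ (by positivity)]; nlinarith
  have h16 : (16 : ℝ) ^ n ≤ t ^ n := by
    have : ((16 : ℝ) ^ n) ^ 2 ≤ (t ^ n) ^ 2 := by
      rw [← pow_mul, mul_comm]; exact hR2.trans hsq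
    exact le_of_sq_le_sq this (by positivity)
  have h16' : 16 ≤ t := le_of_pow_le_pow_left₀ (by omega) ht0 h16
  refine ⟨t, h16', by rw [htn]; field_simp, hsq.trans ?_⟩
  have : t ≤ (t / 4) ^ 2 := by nlinarith
  calc (t ^ n) ^ 2 ≤ (((t / 4) ^ 2) ^ n) ^ 2 := by gcongr
    _ = _ := by rw [← pow_mul, ← pow_mul]; congr 1; ring

lemma choose_h {n : ℕ} (hn : 2 ≤ n) (ν : ANorm n) (P : Mat n) {Z : ℝ} (hZ2 : 2 ≤ Z) (hnZ : (n : ℝ) ≤ Z)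
    (hPP : P * P = P) (hP0 : P ≠ 0) (hP1 : P ≠ 1) (h1 : ν.f 1 ≤ Z ^ 2)
    (hpr : ∀ v, ν.f (P * v) ≤ Z * ν.f v) (hpr' : ∀ v, ν.f ((1 - P) * v) ≤ Z * ν.f v)
    (D : ℕ) (h : Fin D → Mat n) (hD : (D : ℝ) ≤ Z) (hh : ∀ i, ν.f (h i) ≤ Z)
    (hz : ∀ y, ∃ z, ν.f z ≤ Z ∧ ν.f y ≤ Z * ‖(z * y).trace‖)
    (hc : ∀ w f : Fin n → ℂ, f ⬝ᵥ w = 0 → ν.f (Matrix.vecMulVec w f) = 1 →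
      ∃ c : Fin D → ℂ, (∀ i, ‖c i‖ ≤ Z) ∧ ∀ F, PolyDeg (n + 1) F →
        F (1 + Matrix.vecMulVec w f) = ∑ i, c i * F (h i)) :
    ∃ i, (∀ p, P * p = p → ν.f p ≤ Z ^ (n * (6 * n + 19)) * ν.f (P * (h i * p))) ∧
      ν.f P ≤ Z ^ (6 * n + 9) * ν.f ((1 - P) * (h i * P)) := by
  classical
  have hZ0 : 0 < Z := by linarith
  have hZ1 : 1 ≤ Z := by linarith
  have hPQ : P * (1 - P) = 0 := by rw [mul_sub, hPP]; simp
  have hQP : (1 - P) * P = 0 := by rw [sub_mul, hPP]; simp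
  obtain ⟨j, j', hj⟩ : ∃ j j', P j j' ≠ 0 := by
    by_contra hcon
    push Not at hcon
    exact hP0 (by ext a b; exact hcon a b)
  obtain ⟨i', i, hi⟩ : ∃ i' i, (1 - P) i' i ≠ 0 := by
    by_contra hcon
    push Not at hcon
    apply hP1
    have : 1 - P = 0 := by ext a b; exact hcon a b
    exact (sub_eq_zero.mp this).symm
  -- the nilpotent rank one matrix
  set w₀ : Fin n → ℂ := fun k => (1 - P) k i with hw₀
  set f : Fin n → ℂ := fun k => P j k with hf
  have hfw : f ⬝ᵥ w₀ = 0 := by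
    have := congrFun (congrFun hPQ j) i
    simpa [Matrix.mul_apply, dotProduct, hf, hw₀] using this
  have hy0 : Matrix.vecMulVec w₀ f ≠ 0 := by
    intro h0
    have := congrFun (congrFun h0 i') j'
    simp only [Matrix.vecMulVec_apply, Matrix.zero_apply, mul_eq_zero] at this
    rcases this with h | h
    · exact hi h
    · exact hj h
  have hPw : P.mulVec w₀ = 0 := by
    funext k
    have := congrFun (congrFun hPQ k) i
    simpa [Matrix.mul_apply, Matrix.mulVec, dotProduct, hw₀] using this
  have hfP : Matrix.vecMul f P = f := by
    funext k
    have := congrFun (congrFun hPP j) k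
    simpa [Matrix.mul_apply, Matrix.vecMul, dotProduct, hf] using this
  have hν0 := ν.pos _ hy0
  set r : ℂ := (((ν.f (Matrix.vecMulVec w₀ f))⁻¹ : ℝ) : ℂ) with hr
  set y := Matrix.vecMulVec (r • w₀) f with hy
  have hy1 : ν.f y = 1 := by
    rw [hy, Matrix.smul_vecMulVec, ν.smul, hr, Complex.norm_real, Real.norm_of_nonneg (by positivity)]
    field_simp
  have hPy : P * y = 0 := by
    rw [hy, Matrix.mul_vecMulVec, Matrix.mulVec_smul, hPw]; simp
  have hyP : y * P = y := by rw [hy, Matrix.vecMulVec_mul, hfP]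
  obtain ⟨c, hcZ, hcF⟩ := hc (r • w₀) f (by rw [dotProduct_smul, hfw, smul_zero]) hy1
  obtain ⟨z, hzZ, hzy⟩ := hz y
  rw [hy1] at hzy
  set N : Mat n → Mat n := fun M => 1 - P + P * M * P with hN
  set F : Mat n → ℂ := fun M => (N M).det * (z * (1 - P) * M * P).trace with hF
  have hFP : PolyDeg (n + 1) F := by
    have := PolyDeg.det_mul (n := n) (F := fun i j M => (1 - P) i j + (P * M * P) i j)
      (fun i j => (Aff.const _).add (Aff.entry_mul P P i j)) (Aff.trace_mul (z * (1 - P)) P)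
    exact this
  have hFu : F (1 + y) = (z * y).trace := by
    have e1 : N (1 + y) = 1 := by
      simp only [hN, mul_add, hPy, add_zero, mul_one, hPP]; simp
    have e2 : z * (1 - P) * (1 + y) * P = z * y := by
      rw [mul_add, mul_one, add_mul, mul_assoc z, hQP, mul_zero, zero_add, mul_assoc, hyP, mul_assoc,
        sub_mul, hPy]
      simp
    rw [hF]
    simp only
    rw [e1, e2, Matrix.det_one, one_mul]
  rw [← hFu, hcF F hFP] at hzy
  obtain ⟨i, hi⟩ : ∃ i, 1 ≤ Z ^ 4 * ‖F (h i)‖ := by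
    by_contra hcon
    push Not at hcon
    have a1 : ‖∑ i, c i * F (h i)‖ ≤ ∑ i : Fin D, Z * ‖F (h i)‖ := by
      refine (norm_sum_le _ _).trans (Finset.sum_le_sum fun i _ => ?_)
      rw [norm_mul]
      exact mul_le_mul_of_nonneg_right (hcZ i) (norm_nonneg _)
    have a2 : Z ^ 3 * ∑ i : Fin D, Z * ‖F (h i)‖ ≤ Z := by
      rw [Finset.mul_sum]
      calc ∑ i : Fin D, Z ^ 3 * (Z * ‖F (h i)‖) ≤ ∑ i : Fin D, (1 : ℝ) := by
            refine Finset.sum_le_sum fun i _ => ?_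
            have := (hcon i).le
            calc _ = Z ^ 4 * ‖F (h i)‖ := by ring
              _ ≤ 1 := this
        _ = D := by simp
        _ ≤ Z := hD
    have a3 : Z ^ 3 * 1 ≤ Z ^ 3 * (Z * ‖∑ i, c i * F (h i)‖) := by gcongr
    have a4 : Z ^ 3 * (Z * ‖∑ i, c i * F (h i)‖) ≤ Z * Z := by
      calc _ = Z * (Z ^ 3 * ‖∑ i, c i * F (h i)‖) := by ring
        _ ≤ Z * (Z ^ 3 * ∑ i : Fin D, Z * ‖F (h i)‖) := by gcongr
        _ ≤ _ := by gcongr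
    nlinarith
  refine ⟨i, ?_⟩
  have hP3 : ν.f P ≤ Z ^ 3 := by
    have := hpr 1
    rw [mul_one] at this
    calc _ ≤ _ := this
      _ ≤ Z * Z ^ 2 := by gcongr
      _ = _ := by ring
  have hP3' : ν.f (1 - P) ≤ Z ^ 3 := by
    have := hpr' 1
    rw [mul_one] at this
    calc _ ≤ _ := this
      _ ≤ Z * Z ^ 2 := by gcongr
      _ = _ := by ring
  have hhP : ν.f (h i * P) ≤ Z ^ 4 := by
    calc _ ≤ Z * ν.f P := ν.mul_le_of (hh i)
      _ ≤ Z * Z ^ 3 := by gcongr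
      _ = _ := by ring
  have hNb : ν.f (N (h i)) ≤ Z ^ 6 := by
    have b1 : ν.f (P * h i * P) ≤ Z ^ 5 := by
      rw [mul_assoc]
      calc _ ≤ Z * ν.f (h i * P) := hpr _
        _ ≤ Z * Z ^ 4 := by gcongr
        _ = _ := by ring
    have b2 : Z ^ 3 ≤ Z ^ 5 := pow_le_pow_right₀ hZ1 (by norm_num)
    calc _ ≤ ν.f (1 - P) + ν.f (P * h i * P) := ν.add_le _ _
      _ ≤ Z ^ 5 + Z ^ 5 := by linarith
      _ = 2 * Z ^ 5 := by ring
      _ ≤ Z * Z ^ 5 := by gcongr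
      _ = _ := by ring
  set g := ν.f ((1 - P) * (h i * P)) with hg
  have hg0 : 0 ≤ g := ν.nonneg _
  have hgb : g ≤ Z ^ 5 := by
    calc _ ≤ Z * ν.f (h i * P) := hpr' _
      _ ≤ Z * Z ^ 4 := by gcongr
      _ = _ := by ring
  have htr : ‖(z * (1 - P) * h i * P).trace‖ ≤ Z ^ 2 * g := by
    have : z * (1 - P) * h i * P = z * ((1 - P) * (h i * P)) := by simp only [mul_assoc]
    rw [this]
    calc _ ≤ n * ν.f (z * ((1 - P) * (h i * P))) := ν.trace_le _
      _ ≤ Z * (Z * g) := by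
        gcongr
        · exact ν.nonneg _
        · exact ν.mul_le_of hzZ
      _ = _ := by ring
  have hdet : ‖(N (h i)).det‖ ≤ Z ^ (6 * n) := by
    rw [pow_mul]; exact ν.det_le _ hNb
  have hFi : ‖F (h i)‖ = ‖(N (h i)).det‖ * ‖(z * (1 - P) * h i * P).trace‖ := by
    rw [hF]; simp only [norm_mul]
  rw [hFi] at hi
  constructor
  · intro p hp
    have hη : (Z ^ 11)⁻¹ ≤ ‖(N (h i)).det‖ := by
      rw [inv_le_iff_one_le_mul₀ (by positivity)]
      calc 1 ≤ _ := hi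
        _ ≤ Z ^ 4 * (‖(N (h i)).det‖ * (Z ^ 2 * Z ^ 5)) := by gcongr; exact htr.trans (by gcongr)
        _ = _ := by ring
    have hb := ν.det_inv_bound (N (h i)) (one_le_pow₀ hZ1) hNb (by positivity)
      (inv_le_one_of_one_le₀ (one_le_pow₀ hZ1)) hη p
    have hNp : N (h i) * p = P * (h i * p) := by
      simp only [hN, add_mul, sub_mul, mul_assoc, hp]; simp
    rw [hNp] at hb
    refine hb.trans ?_
    have hnn := ν.nonneg (P * (h i * p))
    gcongr
    rw [div_inv_eq_mul, ← pow_mul, mul_comm n, pow_mul Z (6 * n + 19)]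
    gcongr
    have hz6 : 1 ≤ Z ^ 6 := one_le_pow₀ hZ1
    calc (1 + 2 * Z ^ 6) * Z ^ (6 * n) * Z ^ 11 ≤ (Z ^ 2 * Z ^ 6) * Z ^ (6 * n) * Z ^ 11 := by
          gcongr
          have : 4 ≤ Z ^ 2 := by nlinarith
          nlinarith [mul_le_mul_of_nonneg_right this (by positivity : 0 ≤ Z ^ 6)]
      _ = _ := by ring
  · calc ν.f P ≤ Z ^ 3 * 1 := by rw [mul_one]; exact hP3
      _ ≤ Z ^ 3 * (Z ^ 4 * (Z ^ (6 * n) * (Z ^ 2 * g))) := by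
        gcongr
        refine hi.trans ?_
        gcongr
      _ = _ := by ring

theorem core (n e0 : ℕ) (hn : 2 ≤ n) : ∃ m : ℕ, ∀ (ν : ANorm n) (R : ℝ) (a a' : Mat n) (D : ℕ)
    (h : Fin D → Mat n), (n : ℝ) ^ 2 ≤ R → (16 : ℝ) ^ (2 * n) ≤ R → a' * a = 1 → a * a' = 1 →
    ‖a.det‖ = 1 → R ≤ ‖a.trace‖ → ν.f a ≤ R ^ e0 → ν.f a' ≤ R ^ e0 → (D : ℝ) ≤ R ^ e0 →
    (∀ i, ν.f (h i) ≤ R ^ e0) → (∀ i, IsUnit (h i)) →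
    (∀ y, ∃ z, ν.f z ≤ R ^ e0 ∧ ν.f y ≤ R ^ e0 * ‖(z * y).trace‖) →
    (∀ w f : Fin n → ℂ, f ⬝ᵥ w = 0 → ν.f (Matrix.vecMulVec w f) = 1 →
      ∃ c : Fin D → ℂ, (∀ i, ‖c i‖ ≤ R ^ e0) ∧ ∀ F, PolyDeg (n + 1) F →
        F (1 + Matrix.vecMulVec w f) = ∑ i, c i * F (h i)) →
    ∃ i, ∀ w ∈ Submonoid.closure {a ^ m, h i * a ^ m}, ∀ w' ∈ Submonoid.closure {a ^ m, h i * a ^ m},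
      a ^ m * w ≠ h i * a ^ m * w' := by
  obtain ⟨κ, hκ⟩ : ∃ κ, κ = 4 * n * e0 := ⟨_, rfl⟩
  obtain ⟨q, hq⟩ : ∃ q, q = (2 * κ + 2) * n := ⟨_, rfl⟩
  obtain ⟨m₀, hm₀⟩ : ∃ m₀, m₀ = 2 * q + 1 := ⟨_, rfl⟩
  obtain ⟨e₁, he₁⟩ : ∃ e₁, e₁ = κ * m₀ + q + 1 := ⟨_, rfl⟩
  obtain ⟨p, hp⟩ : ∃ p, p = κ + e₁ + 1 + q + 4 * n + 1 := ⟨_, rfl⟩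
  obtain ⟨s, hs⟩ : ∃ s, s = n * (6 * n + 19) + (6 * n + 9) := ⟨_, rfl⟩
  obtain ⟨m, hm⟩ : ∃ m, m = 3 + p * (6 * s + 2) := ⟨_, rfl⟩
  refine ⟨m, fun ν R a a' D h hR1 hR2 h21 h12 hdet htr ha ha' hD hh hhU hz hc => ?_⟩
  obtain ⟨t, ht16, htR, hRθ⟩ := theta hn hR1 hR2
  obtain ⟨θ, hθ⟩ : ∃ θ, θ = t / 4 := ⟨_, rfl⟩
  rw [← hθ] at hRθ
  have hθ4 : 4 ≤ θ := by linarith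
  have hθ1 : 1 ≤ θ := by linarith
  have hR0 : 0 ≤ R := le_trans (by positivity) hR1
  have hmono : ∀ i j : ℕ, i ≤ j → θ ^ i ≤ θ ^ j := fun i j hij => pow_le_pow_right₀ hθ1 hij
  have hone : ∀ i : ℕ, 1 ≤ θ ^ i := fun i => one_le_pow₀ hθ1
  have hRe : R ^ e0 ≤ θ ^ κ := by
    rw [hκ, pow_mul]; gcongr
  have hQ : (2 + (θ ^ κ) ^ 2) ^ n ≤ θ ^ q := by
    rw [hq, pow_mul]
    gcongr
    have := one_le_pow₀ (hone κ) (n := 2)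
    calc 2 + (θ ^ κ) ^ 2 ≤ (θ ^ κ) ^ 2 * 4 := by linarith
      _ ≤ (θ ^ κ) ^ 2 * θ ^ 2 := by gcongr; nlinarith
      _ = _ := by ring
  obtain ⟨k, -, hgap, hsm, hbig⟩ := gap a hdet (t := t) (by linarith) (by omega) (by rw [htR]; exact htr)
  have hβ : 1 ≤ t ^ k := one_le_pow₀ (by linarith)
  have hαβ : t ^ k < t ^ (k + 1) := pow_lt_pow_right₀ (by linarith) (by omega)
  obtain ⟨P, hPP, hP0, hP1, hcom, hss, hsb⟩ := spectral ν a a' h21 h12 hβ hαβ (hone κ) (ha.trans hRe)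
    (ha'.trans hRe) hQ hgap hsm hbig
  have hθα : t ^ (k + 1) / 2 = θ * (2 * t ^ k) := by rw [hθ]; ring
  have hpr₀ : ∀ v, ν.f (P * v) ≤ θ ^ e₁ * ν.f v := by
    intro v
    refine (proj_bound ν a P hβ (by positivity : (0 : ℝ) ≤ θ ^ κ) (ha.trans hRe) (hone q) hPP hθα hss hsb m₀
      ?_ v).trans ?_
    · calc 2 * (θ ^ q) ^ 2 ≤ θ * (θ ^ q) ^ 2 := by gcongr; linarith
        _ = _ := by rw [hm₀]; ring
    · refine mul_le_mul_of_nonneg_right ?_ (ν.nonneg v)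
      rw [← pow_mul]
      calc _ ≤ θ ^ (κ * m₀ + q) + θ ^ (κ * m₀ + q) := 
            add_le_add (hmono _ _ (by omega)) (hmono _ _ (by omega))
        _ = θ ^ (κ * m₀ + q) * 2 := by ring
        _ ≤ θ ^ (κ * m₀ + q) * θ := by gcongr; linarith
        _ = _ := by rw [he₁]; ring
  obtain ⟨Z, hZ⟩ : ∃ Z, Z = θ ^ p := ⟨_, rfl⟩
  have hZ1 : 1 ≤ Z := hZ ▸ hone p
  have hκZ : R ^ e0 ≤ Z := hRe.trans (hZ ▸ hmono _ _ (by omega))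
  have hpr : ∀ v, ν.f (P * v) ≤ Z * ν.f v := fun v => (hpr₀ v).trans
    (mul_le_mul_of_nonneg_right (hZ ▸ hmono _ _ (by omega)) (ν.nonneg v))
  have hpr' : ∀ v, ν.f ((1 - P) * v) ≤ Z * ν.f v := by
    intro v
    have h1 : ν.f ((1 - P) * v) ≤ ν.f v + ν.f (P * v) := by
      rw [sub_mul, one_mul]; exact ν.sub_le _ _
    have h2 : 1 + θ ^ e₁ ≤ Z := by
      have := hone e₁
      calc 1 + θ ^ e₁ ≤ θ ^ e₁ * 4 := by linarith
        _ ≤ θ ^ e₁ * θ := by gcongr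
        _ = θ ^ (e₁ + 1) := by ring
        _ ≤ Z := hZ ▸ hmono _ _ (by omega)
    have h3 := hpr₀ v
    calc _ ≤ (1 + θ ^ e₁) * ν.f v := by linarith
      _ ≤ _ := mul_le_mul_of_nonneg_right h2 (ν.nonneg v)
  have hν1 : ν.f 1 ≤ Z ^ 2 := by
    rw [← h21, pow_two]
    exact (ν.mul_le _ _).trans (mul_le_mul (ha'.trans hκZ) (ha.trans hκZ) (ν.nonneg _) (by linarith))
  have h2Z : 2 ≤ Z := by
    have : θ ^ 1 ≤ Z := hZ ▸ hmono _ _ (by omega)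
    linarith
  have hnZ : (n : ℝ) ≤ Z := by
    have h1 : (n : ℝ) ≤ R := by
      have : (2 : ℝ) ≤ n := by exact_mod_cast hn
      nlinarith
    exact h1.trans (hRθ.trans (hZ ▸ hmono _ _ (by omega)))
  obtain ⟨i, hi1, hi2⟩ := choose_h hn ν P h2Z hnZ hPP hP0 hP1 hν1 hpr hpr' D h (hD.trans hκZ)
    (fun i => (hh i).trans hκZ)
    (fun y => by
      obtain ⟨z, h1, h2⟩ := hz y
      exact ⟨z, h1.trans hκZ, h2.trans (mul_le_mul_of_nonneg_right hκZ (norm_nonneg _))⟩)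
    (fun w f h1 h2 => by
      obtain ⟨c, h3, h4⟩ := hc w f h1 h2
      exact ⟨c, fun i => (h3 i).trans hκZ, h4⟩)
  have hZm : ∀ i j : ℕ, i ≤ j → Z ^ i ≤ Z ^ j := fun i j hij => pow_le_pow_right₀ hZ1 hij
  have hZE : Z ≤ Z ^ s := by
    have := hZm 1 s (by omega)
    rwa [pow_one] at this
  have haU : IsUnit a := ⟨⟨a, a', h12, h21⟩, rfl⟩
  refine ⟨i, pingpong ν (a ^ m) (h i) P (haU.pow m) (hhU i) (E := Z ^ s) (one_le_pow₀ hZ1) hPP hP0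
    ((show Commute a P from hcom).pow_left m) 
    (fun v => (hpr v).trans (mul_le_mul_of_nonneg_right hZE (ν.nonneg v)))
    (fun v => (hpr' v).trans (mul_le_mul_of_nonneg_right hZE (ν.nonneg v)))
    ((hh i).trans (hκZ.trans hZE))
    (fun p hp => (hi1 p hp).trans (mul_le_mul_of_nonneg_right (hZm _ _ (by omega)) (ν.nonneg _)))
    (hi2.trans (mul_le_mul_of_nonneg_right (hZm _ _ (by omega)) (ν.nonneg _))) ?_⟩
  intro z p' hz' hp'
  have e1 := hss z hz' m
  have e2 := hsb p' hp' m
  rw [hθα, mul_pow] at e2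
  have e3 : 40 * (Z ^ s) ^ 6 * (θ ^ q) ^ 2 ≤ θ ^ m := by
    have h1 : θ ^ q ≤ Z := hZ ▸ hmono _ _ (by omega)
    calc _ ≤ θ ^ 3 * (Z ^ s) ^ 6 * Z ^ 2 := by
          gcongr
          nlinarith [mul_le_mul hθ4 hθ4 (by norm_num) (by linarith)]
      _ = _ := by rw [hZ, hm]; ring
  have hQ0 : 0 < θ ^ q := by positivity
  have hz0 := ν.nonneg z
  have hp0 := ν.nonneg p'
  have hb0 : 0 ≤ (2 * t ^ k) ^ m := by positivity
  refine le_of_mul_le_mul_left ?_ hQ0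
  calc θ ^ q * (40 * (Z ^ s) ^ 6 * (ν.f (a ^ m * z) * ν.f p'))
      ≤ θ ^ q * (40 * (Z ^ s) ^ 6 * (((2 * t ^ k) ^ m * θ ^ q * ν.f z) * ν.f p')) := by gcongr
    _ = (40 * (Z ^ s) ^ 6 * (θ ^ q) ^ 2) * ((2 * t ^ k) ^ m * ν.f p' * ν.f z) := by ring
    _ ≤ θ ^ m * ((2 * t ^ k) ^ m * ν.f p' * ν.f z) := by gcongr
    _ = (θ ^ m * (2 * t ^ k) ^ m * ν.f p') * ν.f z := by ring
    _ ≤ (θ ^ q * ν.f (a ^ m * p')) * ν.f z := by gcongr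
    _ = _ := by ring

end UEG

end

section
namespace UEG
section

/-- the ball of radius `k` -/
def Ball (S : Set G) (k : ℕ) : Set G :=
  {g | ∃ w : List G, w.length ≤ k ∧ (∀ x ∈ w, x ∈ S ∨ x⁻¹ ∈ S) ∧ w.prod = g}

lemma Ball.one (S : Set G) (k : ℕ) : (1 : G) ∈ Ball S k := ⟨[], by simp⟩

lemma Ball.mono (S : Set G) {k l : ℕ} (h : k ≤ l) : Ball S k ⊆ Ball S l := by
  rintro g ⟨w, h1, h2⟩
  exact ⟨w, h1.trans h, h2⟩

lemma Ball.mul {S : Set G} {k l : ℕ} {g g' : G} (h : g ∈ Ball S k) (h' : g' ∈ Ball S l) :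
    g * g' ∈ Ball S (k + l) := by
  obtain ⟨w, h1, h2, rfl⟩ := h
  obtain ⟨w', h1', h2', rfl⟩ := h'
  refine ⟨w ++ w', by simp; omega, ?_, by simp⟩
  intro x hx
  rcases List.mem_append.mp hx with hx | hx
  · exact h2 x hx
  · exact h2' x hx

lemma Ball.inv {S : Set G} {k : ℕ} {g : G} (h : g ∈ Ball S k) : g⁻¹ ∈ Ball S k := by
  obtain ⟨w, h1, h2, rfl⟩ := h
  refine ⟨(w.map (·⁻¹)).reverse, by simpa using h1, ?_, by rw [List.prod_inv_reverse]⟩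
  intro x hx
  simp only [List.mem_reverse, List.mem_map] at hx
  obtain ⟨y, hy, rfl⟩ := hx
  rw [inv_inv]
  exact (h2 y hy).symm

lemma Ball.succ {S : Set G} {k : ℕ} {g : G} (h : g ∈ Ball S (k + 1)) :
    ∃ s ∈ Ball S 1, ∃ g' ∈ Ball S k, g = s * g' := by
  obtain ⟨w, h1, h2, rfl⟩ := h
  cases w with
  | nil => exact ⟨1, Ball.one _ _, 1, Ball.one _ _, by simp⟩
  | cons a w =>
    refine ⟨a, ⟨[a], by simp, by simpa using h2 a (by simp), by simp⟩, w.prod,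
      ⟨w, by simpa using h1, fun x hx => h2 x (by simp [hx]), rfl⟩, by simp⟩

lemma Ball.pow {S : Set G} {k : ℕ} {g : G} (h : g ∈ Ball S k) (m : ℕ) : g ^ m ∈ Ball S (m * k) := by
  induction m with
  | zero => simpa using Ball.one S _
  | succ m ih => rw [pow_succ, Nat.succ_mul]; exact Ball.mul ih h

lemma Ball.exists {S : Set G} (hS : Subgroup.closure S = ⊤) (g : G) : ∃ k, g ∈ Ball S k := by
  have : g ∈ Subgroup.closure S := by rw [hS]; trivial
  induction this using Subgroup.closure_induction with
  | mem x hx => exact ⟨1, [x], by simp, by simpa using Or.inl hx, by simp⟩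
  | one => exact ⟨0, Ball.one _ _⟩
  | mul x y _ _ hx hy =>
    obtain ⟨k, hk⟩ := hx
    obtain ⟨l, hl⟩ := hy
    exact ⟨_, Ball.mul hk hl⟩
  | inv x _ hx =>
    obtain ⟨k, hk⟩ := hx
    exact ⟨k, Ball.inv hk⟩

lemma Ball.zero (S : Set G) : Ball S 0 = {1} := by
  ext g
  constructor
  · rintro ⟨w, h1, h2, rfl⟩
    have : w = [] := List.length_eq_zero_iff.mp (by omega)
    simp [this]
  · rintro rfl; exact Ball.one _ _

lemma Ball.finite {S : Set G} (hS : S.Finite) (k : ℕ) : (Ball S k).Finite := by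
  induction k with
  | zero => rw [Ball.zero]; exact Set.finite_singleton _
  | succ k ih =>
    have h1 : (Ball S 1).Finite := by
      refine ((hS.union hS.inv).insert 1).subset ?_
      rintro g ⟨w, h1, h2, rfl⟩
      match w, h1, h2 with
      | [], _, _ => simp
      | [a], _, h2 =>
        have := h2 a (by simp)
        simpa using Or.inr this
      | a :: b :: w, h1, _ => simp at h1
    refine ((h1.prod ih).image fun p => p.1 * p.2).subset ?_
    intro g hg
    obtain ⟨s, hs, g', hg', rfl⟩ := Ball.succ hg
    exact ⟨(s, g'), ⟨hs, hg'⟩, rfl⟩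

/-- stabilization of chains -/
lemma stab {α : Type*} [PartialOrder α] (f : ℕ → α) (hf : Monotone f)
    (hstep : ∀ k, f k = f (k + 1) → f (k + 1) = f (k + 2)) (r : α → ℕ)
    (hr : ∀ k, f k < f (k + 1) → r (f k) < r (f (k + 1))) (N : ℕ) :
    (∀ m, N ≤ m → f m = f N) ∨ N ≤ r (f N) := by
  have key : ∀ k, f k = f (k + 1) → ∀ m, k ≤ m → f m = f (m + 1) := by
    intro k hk m hm
    induction m, hm using Nat.le_induction with
    | base => exact hk
    | succ m _ ih => exact hstep m ih
  have key2 : ∀ k, f k = f (k + 1) → ∀ m, k ≤ m → f m = f k := by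
    intro k hk m hm
    induction m, hm using Nat.le_induction with
    | base => rfl
    | succ m hm ih => rw [← key k hk m hm, ih]
  by_cases h : ∃ k < N, f k = f (k + 1)
  · obtain ⟨k, hkN, hk⟩ := h
    left
    intro m hm
    rw [key2 k hk m (by omega), key2 k hk N (by omega)]
  · push Not at h
    right
    have : ∀ k ≤ N, k ≤ r (f k) := by
      intro k hk
      induction k with
      | zero => omega
      | succ k ih =>
        have h1 := ih (by omega)
        have h2 := hr k (lt_of_le_of_ne (hf (by omega)) (h k (by omega)))
        omega
    exact this N le_rfl

variable {n : ℕ} (ρ : G →* Mat n)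

/-- multiplication acts linearly on the Veronese span -/
lemma phi_left_mul {d : ℕ} (A : Mat n) {T U : Set (Mat n)}
    (h : ∀ X ∈ T, phi d (A * X) ∈ Submodule.span ℂ (phi d '' U)) {X : Mat n}
    (hX : phi d X ∈ Submodule.span ℂ (phi d '' T)) : phi d (A * X) ∈ Submodule.span ℂ (phi d '' U) := by
  classical
  by_contra hcon
  obtain ⟨f, hf, hker⟩ := Submodule.exists_le_ker_of_notMem hcon
  have hF : PolyDeg d (fun M => f (phi d M)) := by
    refine ⟨fun I => f (Pi.single I 1), fun M => ?_⟩
    show f (phi d M) = _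
    conv_lhs => rw [pi_eq_sum_univ' (phi d M)]
    rw [map_sum]
    refine Finset.sum_congr rfl fun I _ => ?_
    rw [map_smul, smul_eq_mul, mul_comm]
  obtain ⟨c, hc⟩ := hF.translate A 1
  simp only [mul_one] at hc
  let g : (Idx n d → ℂ) →ₗ[ℂ] ℂ := ∑ I, c I • LinearMap.proj I
  have hg : ∀ M, g (phi d M) = f (phi d (A * M)) := by
    intro M
    rw [hc]
    simp [g]
  have h1 : Submodule.span ℂ (phi d '' T) ≤ LinearMap.ker g := by
    rw [Submodule.span_le]
    rintro _ ⟨M, hM, rfl⟩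
    show g _ = 0
    rw [hg]
    exact hker (h M hM)
  have := h1 hX
  rw [LinearMap.mem_ker, hg] at this
  exact hf this

lemma span_stab {d : ℕ} {S : Set G} (hS : Subgroup.closure S = ⊤) {J : ℕ} (hJ : Fintype.card (Idx n d) < J) :
    Submodule.span ℂ (phi d '' ((MonoidHom.mrange ρ : Submonoid (Mat n)) : Set (Mat n))) ≤
      Submodule.span ℂ (phi d '' (ρ '' Ball S J)) := by
  let f : ℕ → Submodule ℂ (Idx n d → ℂ) := fun k => Submodule.span ℂ (phi d '' (ρ '' Ball S k))
  have hmono : Monotone f := fun k l hkl =>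
    Submodule.span_mono (Set.image_mono (Set.image_mono (Ball.mono S hkl)))
  have hmem : ∀ k g, g ∈ Ball S k → phi d (ρ g) ∈ f k := fun k g hg =>
    Submodule.subset_span ⟨_, ⟨g, hg, rfl⟩, rfl⟩
  have hst := stab f hmono (fun k hk => by
    refine le_antisymm (hmono (by omega)) ?_
    refine Submodule.span_le.mpr ?_
    rintro _ ⟨_, ⟨g, hg, rfl⟩, rfl⟩
    obtain ⟨s, hs, g', hg', rfl⟩ := Ball.succ hg
    rw [map_mul]
    have h1 := hmem _ _ hg'
    rw [← hk] at h1
    refine phi_left_mul (ρ s) (T := ρ '' Ball S k) (U := ρ '' Ball S (k + 1)) ?_ h1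
    rintro _ ⟨x, hx, rfl⟩
    rw [← map_mul]
    exact Submodule.subset_span ⟨_, ⟨_, by rw [add_comm]; exact Ball.mul hs hx, rfl⟩, rfl⟩)
    (fun V => Module.finrank ℂ V) (fun k hk => Submodule.finrank_lt_finrank_of_lt hk) J
  rcases hst with hst | hst
  · refine Submodule.span_le.mpr ?_
    rintro _ ⟨_, ⟨g, rfl⟩, rfl⟩
    obtain ⟨k, hk⟩ := Ball.exists hS g
    have h1 := hmem (max k J) g (Ball.mono S (le_max_left _ _) hk)
    rw [hst _ (le_max_right _ _)] at h1
    exact h1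
  · have := Submodule.finrank_le (f J)
    rw [Module.finrank_fintype_fun_eq_card] at this
    omega

lemma card_ball {S : Set G} (hS : Subgroup.closure S = ⊤) (hfin : S.Finite) (hinf : (Set.range ρ).Infinite) (N : ℕ) :
    N ≤ (ρ '' Ball S N).ncard := by
  let f : ℕ → Set (Mat n) := fun k => ρ '' Ball S k
  have hst := stab f (fun k l hkl => Set.image_mono (Ball.mono S hkl)) (fun k hk => by
    apply Set.Subset.antisymm
    · exact Set.image_mono (Ball.mono S (by omega))
    · rintro _ ⟨g, hg, rfl⟩
      obtain ⟨s, hs, g', hg', rfl⟩ := Ball.succ hg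
      have h1 : ρ g' ∈ f (k + 1) := ⟨g', hg', rfl⟩
      rw [← hk] at h1
      obtain ⟨g'', hg'', he⟩ := h1
      refine ⟨s * g'', by rw [add_comm]; exact Ball.mul hs hg'', ?_⟩
      rw [map_mul, map_mul, he])
    Set.ncard (fun k hk => Set.ncard_lt_ncard hk ((Ball.finite hfin _).image _)) N
  rcases hst with hst | hst
  · exfalso
    refine hinf (((Ball.finite hfin N).image ρ).subset ?_)
    rintro _ ⟨g, rfl⟩
    obtain ⟨k, hk⟩ := Ball.exists hS g
    have h1 : ρ g ∈ f (max k N) := ⟨g, Ball.mono S (le_max_left _ _) hk, rfl⟩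
    rw [hst _ (le_max_right _ _)] at h1
    exact h1
  · exact hst

end
end UEG

end

section
namespace UEG
section

lemma phi_one_mem {n : ℕ} (hn : 2 ≤ n) (Γ : Submonoid (Mat n))
    (hΓ : ∀ (i j : Fin n) (k : ℤ), i ≠ j → Matrix.transvection i j (k : ℂ) ∈ Γ) (X : Mat n) :
    phi 1 X ∈ Submodule.span ℂ (phi 1 '' (Γ : Set (Mat n))) := by
  classical
  by_contra hcon
  obtain ⟨f, hf, hker⟩ := Submodule.exists_le_ker_of_notMem hcon
  let L : Mat n →ₗ[ℂ] ℂ := 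
    { toFun := fun M => f (fun I => match I 0 with | none => 0 | some p => M p.1 p.2)
      map_add' := by
        intro M N
        rw [← map_add]
        congr 1
        funext I
        simp only [Pi.add_apply]
        cases I 0 <;> simp
      map_smul' := by
        intro c M
        rw [RingHom.id_apply, ← map_smul]
        congr 1
        funext I
        simp only [Pi.smul_apply]
        cases I 0 <;> simp }
  let c0 : ℂ := f (fun I => match I 0 with | none => 1 | some _ => 0)
  have hL : ∀ M, f (phi 1 M) = c0 + L M := by
    intro M
    show _ = f _ + f _
    rw [← map_add]
    congr 1
    funext I
    simp only [phi, Pi.add_apply, Fin.prod_univ_one]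
    cases I 0 <;> simp [crd]
  have hv : ∀ γ ∈ Γ, c0 + L γ = 0 := by
    intro γ hγ
    rw [← hL]
    exact hker (Submodule.subset_span ⟨γ, hγ, rfl⟩)
  have h1 := hv 1 Γ.one_mem
  have h2 : ∀ i j, i ≠ j → L (Matrix.single i j 1) = 0 := by
    intro i j hij
    have := hv _ (hΓ i j 1 hij)
    rw [Matrix.transvection, map_add, ← add_assoc, h1, zero_add] at this
    simpa using this
  have h3 : ∀ j, L (Matrix.single j j 1) = 0 := by
    intro j
    obtain ⟨i, hij⟩ : ∃ i : Fin n, i ≠ j := by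
      have : Nontrivial (Fin n) := Fin.nontrivial_iff_two_le.mpr hn
      exact exists_ne j
    have := hv _ (Γ.mul_mem (hΓ j i 1 hij.symm) (hΓ i j 1 hij))
    rw [Matrix.transvection, Matrix.transvection, mul_add, mul_one, add_mul, one_mul,
      Matrix.single_mul_single_same] at this
    simp only [map_add, Int.cast_one, mul_one] at this
    rw [h2 _ _ hij, h2 _ _ hij.symm] at this
    linear_combination this - h1
  have h4 : L = 0 := by
    refine Matrix.ext_linearMap ℂ ?_
    intro i j
    ext
    by_cases hij : i = j
    · subst hij; simpa using h3 i
    · simpa using h2 i j hij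
  apply hf
  rw [hL, h4]
  rw [h4] at h1
  simpa using h1

/-- the trace norm -/
noncomputable def traceNorm {n D : ℕ} (h : Fin D → Mat n) (S : Matrix (Fin D) (Fin D) ℂ)
    (hX : ∀ X : Mat n, X = ∑ i, (∑ j, (X * h j).trace * S j i) • h i) {τ : ℝ} (hτ : 0 < τ)
    (hS : ∀ i j, ‖S i j‖ ≤ τ) : ANorm n where
  f x := τ * ∑ i, ∑ j, ‖(h i * x * h j).trace‖
  add_le x y := by
    rw [← mul_add]
    refine mul_le_mul_of_nonneg_left ?_ hτ.le
    simp only [← Finset.sum_add_distrib]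
    refine Finset.sum_le_sum fun i _ => Finset.sum_le_sum fun j _ => ?_
    rw [mul_add, add_mul, Matrix.trace_add]
    exact norm_add_le _ _
  smul c x := by
    rw [mul_left_comm]
    congr 1
    simp only [Finset.mul_sum]
    refine Finset.sum_congr rfl fun i _ => Finset.sum_congr rfl fun j _ => ?_
    simp
  mul_le x y := by
    have key : ∀ i j, ‖(h i * (x * y) * h j).trace‖ ≤
        τ * ((∑ l, ‖(h i * x * h l).trace‖) * ∑ k, ‖(h k * y * h j).trace‖) := by
      intro i j
      have e : (h i * (x * y) * h j).trace =
          ∑ k, (∑ l, (h i * x * h l).trace * S l k) * (h k * y * h j).trace := by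
        have : h i * (x * y) * h j = (h i * x) * (y * h j) := by simp only [mul_assoc]
        rw [this]
        conv_lhs => rw [hX (h i * x)]
        rw [Finset.sum_mul, Matrix.trace_sum]
        refine Finset.sum_congr rfl fun k _ => ?_
        rw [Matrix.smul_mul, Matrix.trace_smul, smul_eq_mul, mul_assoc (h k)]
      rw [e, Finset.mul_sum, Finset.mul_sum]
      refine (norm_sum_le _ _).trans (Finset.sum_le_sum fun k _ => ?_)
      rw [norm_mul, ← mul_assoc, Finset.mul_sum]
      refine mul_le_mul_of_nonneg_right ?_ (norm_nonneg _)
      refine (norm_sum_le _ _).trans (Finset.sum_le_sum fun l _ => ?_)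
      rw [norm_mul, mul_comm]
      exact mul_le_mul_of_nonneg_right (hS _ _) (norm_nonneg _)
    calc _ ≤ τ * ∑ i, ∑ j, τ * ((∑ l, ‖(h i * x * h l).trace‖) * ∑ k, ‖(h k * y * h j).trace‖) := by
          gcongr with i _ j _
          exact key i j
      _ = τ * (τ * ∑ i, ∑ j, ((∑ l, ‖(h i * x * h l).trace‖) * ∑ k, ‖(h k * y * h j).trace‖)) := by
          simp only [Finset.mul_sum]
      _ = τ * (τ * ((∑ i, ∑ l, ‖(h i * x * h l).trace‖) * ∑ j, ∑ k, ‖(h k * y * h j).trace‖)) := by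
          rw [Finset.sum_mul_sum]
      _ = _ := by
          rw [Finset.sum_comm (f := fun j k => ‖(h k * y * h j).trace‖)]
          ring
  pos x hx := by
    refine mul_pos hτ ?_
    have h0 : 0 ≤ ∑ i, ∑ j, ‖(h i * x * h j).trace‖ :=
      Finset.sum_nonneg fun i _ => Finset.sum_nonneg fun j _ => norm_nonneg _
    refine lt_of_le_of_ne h0 fun heq => hx ?_
    have h1 : ∀ i j, (h i * x * h j).trace = 0 := by
      intro i j
      have h2 := (Finset.sum_eq_zero_iff_of_nonneg
        (fun i _ => Finset.sum_nonneg fun j _ => norm_nonneg _)).mp heq.symm i (Finset.mem_univ _)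
      have h3 := (Finset.sum_eq_zero_iff_of_nonneg (fun j _ => norm_nonneg _)).mp h2 j (Finset.mem_univ _)
      exact norm_eq_zero.mp h3
    have h2 : ∀ i, h i * x = 0 := by
      intro i
      rw [hX (h i * x)]
      simp [h1]
    calc x = 1 * x := (one_mul x).symm
      _ = (∑ i, (∑ j, ((1 : Mat n) * h j).trace * S j i) • h i) * x := by rw [← hX 1]
      _ = 0 := by
        rw [Finset.sum_mul]
        refine Finset.sum_eq_zero fun i _ => ?_
        rw [Matrix.smul_mul, h2, smul_zero]

lemma traceNorm_le {n D : ℕ} (h : Fin D → Mat n) (S : Matrix (Fin D) (Fin D) ℂ)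
    (hX : ∀ X : Mat n, X = ∑ i, (∑ j, (X * h j).trace * S j i) • h i) {τ : ℝ} (hτ : 0 < τ)
    (hS : ∀ i j, ‖S i j‖ ≤ τ) (x : Mat n) {r : ℝ} (hr : ∀ i j, ‖(h i * x * h j).trace‖ ≤ r) :
    (traceNorm h S hX hτ hS).f x ≤ τ * (D ^ 2 * r) := by
  show τ * _ ≤ _
  refine mul_le_mul_of_nonneg_left ?_ hτ.le
  calc _ ≤ ∑ _i : Fin D, ∑ _j : Fin D, r :=
        Finset.sum_le_sum fun i _ => Finset.sum_le_sum fun j _ => hr i j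
    _ = _ := by simp; ring

lemma traceNorm_le_trace {n D : ℕ} (h : Fin D → Mat n) (S : Matrix (Fin D) (Fin D) ℂ)
    (hX : ∀ X : Mat n, X = ∑ i, (∑ j, (X * h j).trace * S j i) • h i) {τ : ℝ} (hτ : 0 < τ)
    (hS : ∀ i j, ‖S i j‖ ≤ τ) (hD : 0 < D) (y : Mat n) :
    ∃ i j, (traceNorm h S hX hτ hS).f y ≤ τ * (D ^ 2 * ‖(h j * h i * y).trace‖) := by
  have : Nonempty (Fin D × Fin D) := ⟨(⟨0, hD⟩, ⟨0, hD⟩)⟩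
  obtain ⟨p, hp⟩ := Finite.exists_max (fun p : Fin D × Fin D => ‖(h p.1 * y * h p.2).trace‖)
  refine ⟨p.1, p.2, ?_⟩
  have : (h p.2 * h p.1 * y).trace = (h p.1 * y * h p.2).trace := by
    rw [mul_assoc, Matrix.trace_mul_comm]
  rw [this]
  exact traceNorm_le h S hX hτ hS y fun i j => hp (i, j)

lemma gram_linear {n : ℕ} (hn : 2 ≤ n) (Γ : Submonoid (Mat n)) (hIntg : ∀ γ ∈ Γ, IsInt γ)
    (htr : ∀ γ ∈ Γ, γ.transpose ∈ Γ)
    (hΓ : ∀ (i j : Fin n) (k : ℤ), i ≠ j → Matrix.transvection i j (k : ℂ) ∈ Γ)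
    (B : Set (Mat n)) (hB : B ⊆ Γ)
    (hspan : Submodule.span ℂ (phi 1 '' (Γ : Set (Mat n))) ≤ Submodule.span ℂ (phi 1 '' B)) :
    ∃ (D : ℕ) (h : Fin D → Mat n) (S : Matrix (Fin D) (Fin D) ℂ), D ≤ Fintype.card (Idx n 1) ∧ 0 < D ∧
      (∀ i, h i ∈ B) ∧
      (∀ b : ℝ, 1 ≤ b → (∀ i j, ‖1 + (h i * h j).trace‖ ≤ b) →
        ∀ i j, ‖S i j‖ ≤ (D.factorial : ℝ) * b ^ D) ∧
      ∀ X : Mat n, X = ∑ i, (∑ j, (X * h j).trace * S j i) • h i := by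
  obtain ⟨D, h, S, hD, hhB, hS, hF⟩ := gram Γ hIntg htr B hB hspan
  have hXX : ∀ X : Mat n, X = ∑ i, (∑ j, (X * h j).trace * S j i) • h i := by
    intro X
    ext a b
    have hP : PolyDeg 1 (fun M : Mat n => M a b) := by
      have := PolyDeg.prod_aff (d := 1) (fun _ (M : Mat n) => M a b) (fun _ => Aff.entry a b)
      simpa using this
    have e1 := hF X (phi_one_mem hn Γ hΓ X) _ hP
    have e2 := hF 0 (phi_one_mem hn Γ hΓ 0) _ hP
    simp only [pow_one, zero_mul, Matrix.trace_zero, add_zero, one_mul, Matrix.zero_apply] at e1 e2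
    rw [e1, Matrix.sum_apply, ← sub_zero (∑ i, _), e2, ← Finset.sum_sub_distrib]
    refine Finset.sum_congr rfl fun i _ => ?_
    rw [Matrix.smul_apply, smul_eq_mul, ← sub_mul, ← Finset.sum_sub_distrib]
    congr 1
    refine Finset.sum_congr rfl fun j _ => by ring
  refine ⟨D, h, S, hD, ?_, hhB, by simpa using hS, hXX⟩
  rcases Nat.eq_zero_or_pos D with h0 | h0
  · exfalso
    subst h0
    have := hXX 1
    simp only [Finset.univ_eq_empty, Finset.sum_empty] at this
    have h1 := congrFun (congrFun this ⟨0, by omega⟩) ⟨0, by omega⟩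
    simp at h1
  · exact h0

end
end UEG

end

section
namespace UEG
section

/-- the data we need on a representation -/
structure GoodRep {n : ℕ} (ρ : G →* Mat n) : Prop where
  int : ∀ g, IsInt (ρ g)
  tr : ∀ g, ∃ g', ρ g' = (ρ g).transpose
  tv : ∀ (i j : Fin n) (k : ℤ), i ≠ j → ∃ g, ρ g = Matrix.transvection i j (k : ℂ)

variable {n : ℕ} {ρ : G →* Mat n}

lemma IsInt.trace {M : Mat n} (h : IsInt M) : ∃ k : ℤ, M.trace = k := by
  obtain ⟨A, rfl⟩ := h
  exact ⟨A.trace, by simp [Matrix.trace]⟩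

lemma GoodRep.inf (hρ : GoodRep ρ) (hn : 2 ≤ n) : (Set.range ρ).Infinite := by
  have h01 : (⟨0, by omega⟩ : Fin n) ≠ ⟨1, by omega⟩ := by simp
  refine Set.infinite_of_injective_forall_mem
    (f := fun k : ℤ => Matrix.transvection (⟨0, by omega⟩ : Fin n) ⟨1, by omega⟩ (k : ℂ)) ?_ ?_
  · intro k l hkl
    have := congrFun (congrFun hkl ⟨0, by omega⟩) ⟨1, by omega⟩
    simp only [Matrix.transvection, Matrix.add_apply, Matrix.one_apply_ne h01, Matrix.single_apply_same,
      zero_add] at this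
    exact_mod_cast this
  · intro k
    exact hρ.tv _ _ k h01

lemma GoodRep.det (hρ : GoodRep ρ) (g : G) : ‖(ρ g).det‖ = 1 := by
  obtain ⟨A, hA⟩ := hρ.int g
  obtain ⟨B, hB⟩ := hρ.int g⁻¹
  have h1 : (ρ g).det = (A.det : ℂ) := by
    rw [hA]; exact (Int.cast_det A).symm
  have h2 : (ρ g⁻¹).det = (B.det : ℂ) := by
    rw [hB]; exact (Int.cast_det B).symm
  have h3 : (ρ g).det * (ρ g⁻¹).det = 1 := by
    rw [← Matrix.det_mul, ← map_mul, mul_inv_cancel, map_one, Matrix.det_one]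
  rw [h1, h2] at h3
  have h4 : A.det * B.det = 1 := by exact_mod_cast h3
  rw [h1]
  rcases Int.eq_one_or_neg_one_of_mul_eq_one h4 with h | h <;> rw [h] <;> simp

lemma GoodRep.range (hρ : GoodRep ρ) : 
    (∀ γ ∈ MonoidHom.mrange ρ, IsInt γ) ∧ (∀ γ ∈ MonoidHom.mrange ρ, γ.transpose ∈ MonoidHom.mrange ρ) ∧
    (∀ (i j : Fin n) (k : ℤ), i ≠ j → Matrix.transvection i j (k : ℂ) ∈ MonoidHom.mrange ρ) := by
  refine ⟨?_, ?_, ?_⟩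
  · rintro _ ⟨g, rfl⟩; exact hρ.int g
  · rintro _ ⟨g, rfl⟩; exact hρ.tr g
  · intro i j k hij; exact hρ.tv i j k hij

lemma ball_sub_range (S : Set G) (J : ℕ) : ρ '' Ball S J ⊆ MonoidHom.mrange ρ := by
  rintro _ ⟨g, -, rfl⟩; exact ⟨g, rfl⟩

lemma unbounded (hρ : GoodRep ρ) (hn : 2 ≤ n) (C : ℕ) : ∃ K₀, ∀ K, K₀ ≤ K → ∀ S : Set G, S.Finite →
    Subgroup.closure S = ⊤ → ∃ g ∈ Ball S K, (C : ℝ) ≤ ‖(ρ g).trace‖ := by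
  obtain ⟨J, hJ⟩ : ∃ J, J = Fintype.card (Idx n 1) + 1 := ⟨_, rfl⟩
  refine ⟨(2 * C + 1) ^ J + 1 + J, fun K hK S hfin hS => ?_⟩
  by_contra hcon
  push Not at hcon
  obtain ⟨r1, r2, r3⟩ := hρ.range
  obtain ⟨D, h, T, hD, hD0, hB, -, hX⟩ := gram_linear hn (MonoidHom.mrange ρ) r1 r2 r3 (ρ '' Ball S J)
    (ball_sub_range S J) (span_stab ρ hS (by omega))
  set N := (2 * C + 1) ^ J + 1 with hN
  have hcard := card_ball ρ hS hfin (hρ.inf hn) N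
  have htr : ∀ X ∈ ρ '' Ball S N, ∀ j, ∃ k ∈ Finset.Icc (-C : ℤ) C, (X * h j).trace = k := by
    rintro _ ⟨g, hg, rfl⟩ j
    obtain ⟨x, hx, hxj⟩ := hB j
    have h1 := hcon (g * x) (Ball.mono S hK (Ball.mul hg hx))
    rw [map_mul, hxj] at h1
    obtain ⟨k, hk⟩ := (hρ.int (g * x)).trace
    rw [map_mul, hxj] at hk
    refine ⟨k, ?_, hk⟩
    rw [hk, Complex.norm_intCast] at h1
    have h2 : |k| < (C : ℤ) := by exact_mod_cast h1
    rw [abs_lt] at h2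
    rw [Finset.mem_Icc]
    omega
  choose! k hk hkt using htr
  have hle : (ρ '' Ball S N).ncard ≤ (Fintype.piFinset fun _ : Fin D => Finset.Icc (-C : ℤ) C).card := by
    rw [← Set.ncard_coe_finset]
    refine Set.ncard_le_ncard_of_injOn k ?_ ?_ (Finset.finite_toSet _)
    · intro X hX
      exact Finset.mem_coe.mpr (Fintype.mem_piFinset.mpr fun j => hk X hX j)
    · intro X hX' Y hY hXY
      rw [hX X, hX Y]
      refine Finset.sum_congr rfl fun i _ => ?_
      congr 1
      refine Finset.sum_congr rfl fun j _ => ?_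
      rw [hkt X hX' j, hkt Y hY j, hXY]
  have hc : (Fintype.piFinset fun _ : Fin D => Finset.Icc (-C : ℤ) C).card = (2 * C + 1) ^ D := by
    rw [Fintype.card_piFinset]
    simp only [Int.card_Icc, Finset.prod_const, Finset.card_univ, Fintype.card_fin]
    congr 1
    omega
  rw [hc] at hle
  have : (2 * C + 1) ^ D ≤ (2 * C + 1) ^ J := Nat.pow_le_pow_right (by omega) (by omega)
  omega

theorem uniform (hρ : GoodRep ρ) (hn : 2 ≤ n) : ∃ ℓ : ℕ, 0 < ℓ ∧ ∀ S : Set G, S.Finite →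
    Subgroup.closure S = ⊤ → ∃ x ∈ Ball S ℓ, ∃ y ∈ Ball S ℓ,
      ∀ w ∈ Submonoid.closure {x, y}, ∀ w' ∈ Submonoid.closure {x, y}, x * w ≠ y * w' := by
  obtain ⟨d, hd⟩ : ∃ d, d = n + 1 := ⟨_, rfl⟩
  obtain ⟨J, hJ⟩ : ∃ J, J = Fintype.card (Idx n 1) + Fintype.card (Idx n d) + 1 := ⟨_, rfl⟩
  obtain ⟨C, hC⟩ : ∃ C, C = n ^ 2 + 16 ^ (2 * n) + J.factorial + J := ⟨_, rfl⟩
  obtain ⟨K₀, hK₀⟩ := unbounded hρ hn C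
  obtain ⟨K, hK⟩ : ∃ K, K = K₀ + 4 * J + 1 := ⟨_, rfl⟩
  obtain ⟨e₁, he₁⟩ : ∃ e₁, e₁ = 2 * J + 4 := ⟨_, rfl⟩
  obtain ⟨e₂, he₂⟩ : ∃ e₂, e₂ = 1 + ((2 * J + 6) * d + (1 + 2 * d * J)) := ⟨_, rfl⟩
  obtain ⟨e0, he0⟩ : ∃ e0, e0 = e₁ * (K + 1) + e₂ := ⟨_, rfl⟩
  obtain ⟨m, hm⟩ := core n e0 hn
  refine ⟨J + m * K, by omega, fun S hfin hS => ?_⟩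
  obtain ⟨r1, r2, r3⟩ := hρ.range
  obtain ⟨a, haB, hamax⟩ := Set.exists_max_image (Ball S K) (fun g => ‖(ρ g).trace‖) (Ball.finite hfin K)
    ⟨1, Ball.one _ _⟩
  obtain ⟨R, hR⟩ : ∃ R, R = ‖(ρ a).trace‖ := ⟨_, rfl⟩
  have hmax : ∀ k g, g ∈ Ball S k → k ≤ K → ‖(ρ g).trace‖ ≤ R := fun k g hg hk => by
    rw [hR]; exact hamax g (Ball.mono S hk hg)
  have hCR : (C : ℝ) ≤ R := by
    obtain ⟨g, hg, hgC⟩ := hK₀ K (by omega) S hfin hS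
    exact hgC.trans (hmax _ g hg le_rfl)
  have hCR' : ((n ^ 2 + 16 ^ (2 * n) + J.factorial + J : ℕ) : ℝ) ≤ R := by rw [← hC]; exact hCR
  push_cast at hCR'
  have p1 : (0 : ℝ) ≤ (n : ℝ) ^ 2 := by positivity
  have p2 : (16 : ℝ) ≤ 16 ^ (2 * n) := by
    calc (16 : ℝ) = 16 ^ 1 := by norm_num
      _ ≤ _ := pow_le_pow_right₀ (by norm_num) (by omega)
  have p3 : (0 : ℝ) ≤ J.factorial := by positivity
  have p4 : (0 : ℝ) ≤ J := by positivity
  have hR16 : 16 ≤ R := by linarith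
  have hR1 : 1 ≤ R := by linarith
  have hR0 : 0 < R := by linarith
  have hnR2 : (n : ℝ) ^ 2 ≤ R := by linarith
  have hnR : (n : ℝ) ≤ R := by
    have : (2 : ℝ) ≤ n := by exact_mod_cast hn
    nlinarith
  have hJR : (J : ℝ) ≤ R := by linarith
  have hJfR : (J.factorial : ℝ) ≤ R := by linarith
  have hRm : ∀ i j : ℕ, i ≤ j → R ^ i ≤ R ^ j := fun i j hij => pow_le_pow_right₀ hR1 hij
  have hRone : ∀ i : ℕ, 1 ≤ R ^ i := fun i => one_le_pow₀ hR1
  -- the linear Gram formula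
  obtain ⟨D, h, T, hD, hD0, hB, hT, hX⟩ := gram_linear hn (MonoidHom.mrange ρ) r1 r2 r3 (ρ '' Ball S J)
    (ball_sub_range S J) (span_stab ρ hS (by omega))
  have hDR : (D : ℝ) ≤ R := le_trans (by exact_mod_cast (by omega : D ≤ J)) hJR
  have hone : ∀ g, g ∈ Ball S (2 * J) → ‖1 + (ρ g).trace‖ ≤ R ^ 2 := by
    intro g hg
    have h1 := hmax _ g hg (by omega)
    have h2 := norm_add_le (1 : ℂ) (ρ g).trace
    rw [norm_one] at h2
    nlinarith
  have hfac : ∀ D' ≤ J, ∀ s : ℕ, (D'.factorial : ℝ) * (R ^ s) ^ D' ≤ R ^ (1 + s * J) := by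
    intro D' hD' s
    have h1 : (D'.factorial : ℝ) ≤ R := 
      le_trans (by exact_mod_cast Nat.factorial_le hD') hJfR
    calc _ ≤ R * (R ^ s) ^ J := by
          gcongr
          exact hRone s
      _ = _ := by ring
  have hT' : ∀ i j, ‖T i j‖ ≤ R ^ (1 + 2 * J) := by
    intro i j
    refine (hT (R ^ 2) (hRone 2) ?_ i j).trans (hfac D (by omega) 2)
    intro i j
    obtain ⟨x, hx, hxi⟩ := hB i
    obtain ⟨y, hy, hyj⟩ := hB j
    rw [← hxi, ← hyj, ← map_mul]
    exact hone _ (Ball.mono S (by omega) (Ball.mul hx hy))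
  have hτ : 0 < R ^ (1 + 2 * J) := by positivity
  set ν := traceNorm h T hX hτ hT' with hν
  have hνb : ∀ g, g ∈ Ball S (2 * J + 1) → ν.f (ρ g) ≤ R ^ e₁ := by
    intro g hg
    refine (traceNorm_le h T hX hτ hT' (ρ g) (r := R) ?_).trans ?_
    · intro i j
      obtain ⟨x, hx, hxi⟩ := hB i
      obtain ⟨y, hy, hyj⟩ := hB j
      rw [← hxi, ← hyj, ← map_mul, ← map_mul]
      exact hmax _ _ (Ball.mul (Ball.mul hx hg) hy) (by omega)
    · calc _ ≤ R ^ (1 + 2 * J) * (R ^ 2 * R) := by gcongr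
        _ = _ := by rw [he₁]; ring
  have hνk : ∀ k g, g ∈ Ball S k → ν.f (ρ g) ≤ R ^ (e₁ * (k + 1)) := by
    intro k
    induction k with
    | zero =>
      intro g hg
      rw [zero_add, mul_one]
      exact hνb g (Ball.mono S (by omega) hg)
    | succ k ih =>
      intro g hg
      obtain ⟨s, hs, g', hg', rfl⟩ := Ball.succ hg
      rw [map_mul]
      calc _ ≤ ν.f (ρ s) * ν.f (ρ g') := ν.mul_le _ _
        _ ≤ R ^ e₁ * R ^ (e₁ * (k + 1)) :=
          mul_le_mul (hνb s (Ball.mono S (by omega) hs)) (ih g' hg') (ν.nonneg _) (by positivity)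
        _ = _ := by ring
  have hle1 : e₁ ≤ e0 := by rw [he0]; nlinarith
  -- the Gram formula of degree `n + 1`
  obtain ⟨D', h', T', hD', hB', hTT', hX'⟩ := gram (d := d) (MonoidHom.mrange ρ) r1 r2 (ρ '' Ball S J)
    (ball_sub_range S J) (span_stab ρ hS (by omega))
  have hDR' : (D' : ℝ) ≤ R := le_trans (by exact_mod_cast (by omega : D' ≤ J)) hJR
  have hTb : ∀ i j, ‖T' i j‖ ≤ R ^ (1 + 2 * d * J) := by
    intro i j
    refine (hTT' (R ^ (2 * d)) (hRone _) ?_ i j).trans (hfac D' (by omega) _)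
    intro i j
    obtain ⟨x, hx, hxi⟩ := hB' i
    obtain ⟨y, hy, hyj⟩ := hB' j
    rw [← hxi, ← hyj, ← map_mul, norm_pow, pow_mul]
    gcongr
    exact hone _ (Ball.mono S (by omega) (Ball.mul hx hy))
  have hνh' : ∀ i, ν.f (h' i) ≤ R ^ e₁ := by
    intro i
    obtain ⟨x, hx, hxi⟩ := hB' i
    rw [← hxi]
    exact hνb x (Ball.mono S (by omega) hx)
  obtain ⟨i, hi⟩ := hm ν R (ρ a) (ρ a⁻¹) D' h' hnR2 (by linarith)
    (by rw [← map_mul, inv_mul_cancel, map_one]) (by rw [← map_mul, mul_inv_cancel, map_one])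
    (hρ.det a) hR.le ((hνk K a haB).trans (hRm _ _ (by omega)))
    ((hνk K _ (Ball.inv haB)).trans (hRm _ _ (by omega)))
    (hDR'.trans (by simpa using hRm 1 e0 (by omega)))
    (fun i => (hνh' i).trans (hRm _ _ hle1))
    (fun i => by
      obtain ⟨x, hx, hxi⟩ := hB' i
      rw [← hxi]
      exact (Group.isUnit x).map ρ)
    (fun y => by
      obtain ⟨i, j, hij⟩ := traceNorm_le_trace h T hX hτ hT' hD0 y
      refine ⟨h j * h i, ?_, ?_⟩
      · obtain ⟨x, hx, hxi⟩ := hB i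
        obtain ⟨y, hy, hyj⟩ := hB j
        rw [← hxi, ← hyj, ← map_mul]
        exact (hνb _ (Ball.mono S (by omega) (Ball.mul hy hx))).trans (hRm _ _ hle1)
      · refine hij.trans ?_
        rw [← mul_assoc]
        refine mul_le_mul_of_nonneg_right ?_ (norm_nonneg _)
        calc _ ≤ R ^ (1 + 2 * J) * R ^ 2 := by gcongr
          _ = R ^ (2 * J + 3) := by ring
          _ ≤ _ := hRm _ _ (by omega))
    (fun w f hfw hν1 => by
      set y := Matrix.vecMulVec w f with hy
      refine ⟨fun i => ∑ j, (1 + ((1 + y) * h' j).trace) ^ d * T' j i, ?_, ?_⟩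
      · intro i
        have hb : ∀ j, ‖1 + ((1 + y) * h' j).trace‖ ≤ R ^ (2 * J + 6) := by
          intro j
          have q1 : ‖(h' j).trace‖ ≤ R := by
            obtain ⟨x, hx, hxi⟩ := hB' j
            rw [← hxi]
            exact hmax _ x hx (by omega)
          have q2 : ‖(y * h' j).trace‖ ≤ R ^ (2 * J + 5) := by
            calc _ ≤ n * ν.f (y * h' j) := ν.trace_le _
              _ ≤ R * (1 * R ^ e₁) := by
                refine mul_le_mul hnR ?_ (ν.nonneg _) hR0.le
                exact (ν.mul_le _ _).trans (by rw [hν1]; gcongr; exact hνh' j)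
              _ = _ := by rw [he₁]; ring
          have q3 : R ≤ R ^ (2 * J + 5) := by simpa using hRm 1 (2 * J + 5) (by omega)
          rw [add_mul, one_mul, Matrix.trace_add]
          calc _ ≤ ‖(1 : ℂ)‖ + (‖(h' j).trace‖ + ‖(y * h' j).trace‖) :=
                (norm_add_le _ _).trans (add_le_add le_rfl (norm_add_le _ _))
            _ ≤ R ^ (2 * J + 5) + (R ^ (2 * J + 5) + R ^ (2 * J + 5)) := by
                rw [norm_one]
                linarith
            _ = R ^ (2 * J + 5) * 3 := by ring
            _ ≤ R ^ (2 * J + 5) * R := by gcongr; linarith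
            _ = _ := by ring
        calc _ ≤ ∑ j, ‖(1 + ((1 + y) * h' j).trace) ^ d * T' j i‖ := norm_sum_le _ _
          _ ≤ ∑ _j : Fin D', (R ^ (2 * J + 6)) ^ d * R ^ (1 + 2 * d * J) := by
            refine Finset.sum_le_sum fun j _ => ?_
            rw [norm_mul, norm_pow]
            exact mul_le_mul (pow_le_pow_left₀ (norm_nonneg _) (hb j) d) (hTb j i) (norm_nonneg _)
              (by positivity)
          _ = D' * ((R ^ (2 * J + 6)) ^ d * R ^ (1 + 2 * d * J)) := by simp
          _ ≤ R * ((R ^ (2 * J + 6)) ^ d * R ^ (1 + 2 * d * J)) := by gcongr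
          _ = R ^ e₂ := by rw [he₂]; ring
          _ ≤ _ := hRm _ _ (by omega)
      · intro F hF
        rw [← hd] at hF
        exact hX' (1 + y) (phi_mem_span _ r3 (tv_rank_one w f hfw)) F hF)
  obtain ⟨g, hg, hgi⟩ := hB' i
  refine ⟨a ^ m, Ball.mono S (by omega) (Ball.pow haB m), g * a ^ m, Ball.mul hg (Ball.pow haB m), ?_⟩
  have hmap : ∀ w ∈ Submonoid.closure {a ^ m, g * a ^ m},
      ρ w ∈ Submonoid.closure {ρ a ^ m, h' i * ρ a ^ m} := by
    intro w hw
    have h1 := Submonoid.mem_map_of_mem ρ hw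
    rw [MonoidHom.map_mclosure, Set.image_pair, map_mul, map_pow, hgi] at h1
    exact h1
  intro w hw w' hw' heq
  apply hi _ (hmap w hw) _ (hmap w' hw')
  rw [← hgi, ← map_pow, ← map_mul, ← map_mul, ← map_mul, heq]

end
end UEG

end

section
namespace UEG
section

lemma ball_eq {S : Set G} (hS : Subgroup.closure S = ⊤) (k : ℕ) : {g : G | wordLength S g ≤ k} = Ball S k := by
  ext g
  simp only [Set.mem_ofPred_eq]
  constructor
  · intro h
    have hne : {k | ∃ w : List G, w.length = k ∧ (∀ x ∈ w, x ∈ S ∨ x⁻¹ ∈ S) ∧ w.prod = g}.Nonempty := by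
      obtain ⟨l, w, -, h2, h3⟩ := Ball.exists hS g
      exact ⟨_, w, rfl, h2, h3⟩
    obtain ⟨w, h1, h2, h3⟩ := Nat.sInf_mem hne
    exact ⟨w, by rw [h1]; exact h, h2, h3⟩
  · rintro ⟨w, h1, h2, h3⟩
    have h4 : wordLength S g ≤ w.length := Nat.sInf_le ⟨w, rfl, h2, h3⟩
    exact h4.trans h1

lemma ball_split {S : Set G} {k l : ℕ} {g : G} (h : g ∈ Ball S (k + l)) :
    ∃ a ∈ Ball S k, ∃ b ∈ Ball S l, g = a * b := by
  obtain ⟨w, h1, h2, rfl⟩ := h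
  refine ⟨(w.take k).prod, ⟨w.take k, by simp, fun x hx => h2 x (List.mem_of_mem_take hx), rfl⟩,
    (w.drop k).prod, ⟨w.drop k, by simp; omega, fun x hx => h2 x (List.mem_of_mem_drop hx), rfl⟩, ?_⟩
  rw [← List.prod_append, List.take_append_drop]

lemma ball_card_mul {S : Set G} (hfin : S.Finite) (k l : ℕ) :
    (Ball S (k + l)).ncard ≤ (Ball S k).ncard * (Ball S l).ncard := by
  rw [← Set.ncard_prod]
  refine le_trans (Set.ncard_le_ncard ?_ (((Ball.finite hfin k).prod (Ball.finite hfin l)).image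
    fun p => p.1 * p.2)) (Set.ncard_image_le ((Ball.finite hfin k).prod (Ball.finite hfin l)))
  intro g hg
  obtain ⟨a, ha, b, hb, rfl⟩ := ball_split hg
  exact ⟨(a, b), ⟨ha, hb⟩, rfl⟩

lemma free_count {S : Set G} (hfin : S.Finite) {ℓ : ℕ} {x y : G} (hx : x ∈ Ball S ℓ) (hy : y ∈ Ball S ℓ)
    (hxy : ∀ w ∈ Submonoid.closure {x, y}, ∀ w' ∈ Submonoid.closure {x, y}, x * w ≠ y * w') (k : ℕ) :
    2 ^ k ≤ (Ball S (k * ℓ)).ncard := by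
  classical
  have hxm : x ∈ Submonoid.closure {x, y} := Submonoid.subset_closure (by simp)
  have hym : y ∈ Submonoid.closure {x, y} := Submonoid.subset_closure (by simp)
  have key : ∀ k : ℕ, ∃ W : Finset G, W.card = 2 ^ k ∧ (∀ w ∈ W, w ∈ Submonoid.closure {x, y}) ∧
      ∀ w ∈ W, w ∈ Ball S (k * ℓ) := by
    intro k
    induction k with
    | zero => exact ⟨{1}, by simp, by simp, by simpa using Ball.one _ _⟩
    | succ k ih =>
      obtain ⟨W, h1, h2, h3⟩ := ih
      refine ⟨W.image (x * ·) ∪ W.image (y * ·), ?_, ?_, ?_⟩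
      · rw [Finset.card_union_of_disjoint, Finset.card_image_of_injective _ (mul_right_injective x),
          Finset.card_image_of_injective _ (mul_right_injective y), h1]
        · ring
        · rw [Finset.disjoint_left]
          intro a ha hb
          obtain ⟨w, hw, rfl⟩ := Finset.mem_image.mp ha
          obtain ⟨w', hw', he⟩ := Finset.mem_image.mp hb
          exact hxy w (h2 w hw) w' (h2 w' hw') he.symm
      · intro a ha
        rcases Finset.mem_union.mp ha with ha | ha <;> obtain ⟨w, hw, rfl⟩ := Finset.mem_image.mp ha
        · exact Submonoid.mul_mem _ hxm (h2 w hw)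
        · exact Submonoid.mul_mem _ hym (h2 w hw)
      · intro a ha
        rw [Nat.succ_mul, add_comm]
        rcases Finset.mem_union.mp ha with ha | ha <;> obtain ⟨w, hw, rfl⟩ := Finset.mem_image.mp ha
        · exact Ball.mul hx (h3 w hw)
        · exact Ball.mul hy (h3 w hw)
  obtain ⟨W, h1, -, h3⟩ := key k
  rw [← h1, ← Set.ncard_coe_finset]
  exact Set.ncard_le_ncard (fun w hw => h3 w hw) (Ball.finite hfin _)

lemma growth_ge {S : Set G} (hfin : S.Finite) (hS : Subgroup.closure S = ⊤) {ℓ : ℕ} (hℓ : 0 < ℓ)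
    (h : ∀ k : ℕ, 2 ^ k ≤ (Ball S (k * ℓ)).ncard) : Real.exp (Real.log 2 / ℓ) ≤ growthRate S := by
  have hb : ∀ k, ballCard S k = (Ball S k).ncard := fun k => by rw [ballCard, ball_eq hS]
  have hpos : ∀ k, 1 ≤ ballCard S k := by
    intro k
    rw [hb, Nat.one_le_iff_ne_zero]
    exact (Set.ncard_pos (Ball.finite hfin k)).mpr ⟨1, Ball.one _ _⟩ |>.ne'
  have hpos' : ∀ k, (0 : ℝ) < ballCard S k := fun k => by exact_mod_cast hpos k
  let u : ℕ → ℝ := fun k => Real.log (ballCard S k)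
  have hu : Subadditive u := by
    intro k l
    show Real.log _ ≤ Real.log _ + Real.log _
    rw [← Real.log_mul (hpos' k).ne' (hpos' l).ne']
    refine Real.log_le_log (hpos' _) ?_
    rw [hb, hb, hb]
    exact_mod_cast ball_card_mul hfin k l
  have hbdd : BddBelow (Set.range fun n => u n / n) := by
    refine ⟨0, ?_⟩
    rintro _ ⟨k, rfl⟩
    exact div_nonneg (Real.log_nonneg (by exact_mod_cast hpos k)) (by positivity)
  have hlim := hu.tendsto_lim hbdd
  have hexp : Tendsto (fun n : ℕ => (ballCard S n : ℝ) ^ ((n : ℝ)⁻¹)) atTop (nhds (Real.exp hu.lim)) := by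
    have := (Real.continuous_exp.tendsto hu.lim).comp hlim
    refine this.congr fun k => ?_
    rw [Real.rpow_def_of_pos (hpos' k)]
    rfl
  rw [growthRate, hexp.limUnder_eq, Real.exp_le_exp]
  have hsub : Tendsto (fun k : ℕ => k * ℓ) atTop atTop := tendsto_id.atTop_mul_const' hℓ
  refine ge_of_tendsto (hlim.comp hsub) ?_
  filter_upwards [eventually_ge_atTop 1] with k hk
  show Real.log 2 / ℓ ≤ Real.log (ballCard S (k * ℓ)) / ((k * ℓ : ℕ) : ℝ)
  have hk0 : (0 : ℝ) < k := by exact_mod_cast hk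
  have hℓ0 : (0 : ℝ) < ℓ := by exact_mod_cast hℓ
  rw [Nat.cast_mul, div_le_div_iff₀ hℓ0 (by positivity)]
  have h1 : Real.log ((2 : ℝ) ^ k) ≤ Real.log (ballCard S (k * ℓ)) := by
    refine Real.log_le_log (by positivity) ?_
    rw [hb]
    exact_mod_cast h k
  rw [Real.log_pow] at h1
  nlinarith

theorem growth_main {n : ℕ} {ρ : G →* Mat n} (hρ : GoodRep ρ) (hn : 2 ≤ n)
    (hfg : ∃ S : Finset G, Subgroup.closure (S : Set G) = ⊤) : 1 < minGrowth G := by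
  obtain ⟨ℓ, hℓ, h⟩ := uniform hρ hn
  have h1 : (1 : ℝ) < Real.exp (Real.log 2 / ℓ) := by
    rw [Real.one_lt_exp_iff]
    have : (0 : ℝ) < ℓ := by exact_mod_cast hℓ
    have := Real.log_pos (by norm_num : (1 : ℝ) < 2)
    positivity
  refine lt_of_lt_of_le h1 (le_csInf ?_ ?_)
  · obtain ⟨S, hS⟩ := hfg
    exact ⟨_, S, hS, rfl⟩
  · rintro _ ⟨S, hS, rfl⟩
    obtain ⟨x, hx, y, hy, hxy⟩ := h S S.finite_toSet hS
    exact growth_ge S.finite_toSet hS hℓ (free_count S.finite_toSet hx hy hxy)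

end
end UEG

end

section
namespace UEG
section
open FreeGroup
variable {α : Type*} [DecidableEq α]

/-- length of the longest common initial segment -/
def lcp {A : Type*} [DecidableEq A] : List A → List A → ℕ
  | x :: l, y :: m => if x = y then lcp l m + 1 else 0
  | _, _ => 0

lemma le_lcp {A : Type*} [DecidableEq A] (k : ℕ) (l m : List A) :
    k ≤ lcp l m ↔ k ≤ l.length ∧ k ≤ m.length ∧ l.take k = m.take k := by
  induction l generalizing k m with
  | nil => cases k <;> simp [lcp]
  | cons x l ih =>
    cases m with
    | nil => cases k <;> simp [lcp]
    | cons y m =>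
      cases k with
      | zero => simp
      | succ k =>
        rw [lcp]
        split_ifs with h
        · simp [ih, h]
        · simp [h]

lemma lcp_spec {A : Type*} [DecidableEq A] (l m : List A) :
    ∃ p a b, l = p ++ a ∧ m = p ++ b ∧ p.length = lcp l m := by
  obtain ⟨h1, h2, h3⟩ := (le_lcp _ l m).mp le_rfl
  refine ⟨l.take (lcp l m), l.drop (lcp l m), m.drop (lcp l m), (List.take_append_drop _ _).symm, ?_, ?_⟩
  · rw [h3]; exact (List.take_append_drop _ _).symm
  · simpa using h1

lemma lcp_comm {A : Type*} [DecidableEq A] (l m : List A) : lcp l m = lcp m l := by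
  apply le_antisymm
  · rw [le_lcp]
    obtain ⟨h1, h2, h3⟩ := (le_lcp _ l m).mp le_rfl
    exact ⟨h2, h1, h3.symm⟩
  · rw [le_lcp]
    obtain ⟨h1, h2, h3⟩ := (le_lcp _ m l).mp le_rfl
    exact ⟨h2, h1, h3.symm⟩

lemma lcp_ultra {A : Type*} [DecidableEq A] (l m o : List A) : min (lcp l m) (lcp m o) ≤ lcp l o := by
  rw [le_lcp]
  obtain ⟨h1, h2, h3⟩ := (le_lcp (min (lcp l m) (lcp m o)) l m).mp (min_le_left _ _)
  obtain ⟨h4, h5, h6⟩ := (le_lcp (min (lcp l m) (lcp m o)) m o).mp (min_le_right _ _)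
  exact ⟨h1, h5, h3.trans h6⟩

lemma norm_inv_mul {l m : List (α × Bool)} (hl : IsReduced l) (hm : IsReduced m) :
    ((mk l)⁻¹ * mk m).norm + 2 * lcp l m = l.length + m.length := by
  induction l generalizing m with
  | nil =>
    have h0 : (mk ([] : List (α × Bool))) = 1 := rfl
    rw [h0, inv_one, one_mul, FreeGroup.norm, toWord_mk, hm.reduce_eq]
    simp [lcp]
  | cons x l ih =>
    cases m with
    | nil =>
      have h0 : (mk ([] : List (α × Bool))) = 1 := rfl
      rw [h0, mul_one, norm_inv_eq, FreeGroup.norm, toWord_mk, hl.reduce_eq]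
      simp [lcp]
    | cons y m =>
      by_cases hxy : x = y
      · subst hxy
        have e : (mk (x :: l))⁻¹ * mk (x :: m) = (mk l)⁻¹ * mk m := by
          have e1 : mk (x :: l) = mk [x] * mk l := by rw [mul_mk]; rfl
          have e2 : mk (x :: m) = mk [x] * mk m := by rw [mul_mk]; rfl
          rw [e1, e2]; group
        have := ih (List.IsChain.tail hl) (m := m) (List.IsChain.tail hm)
        rw [e, lcp, if_pos rfl]
        simp only [List.length_cons]
        omega
      · have hred : IsReduced (invRev (x :: l) ++ y :: m) := by
          have h1 : IsReduced (invRev (x :: l)) := by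
            rw [isReduced_iff_reduce_eq, reduce_invRev, hl.reduce_eq]
          have h2 : invRev (x :: l) = invRev l ++ [(x.1, !x.2)] := by rw [invRev_cons]; rfl
          rw [h2] at h1 ⊢
          have : invRev l ++ [(x.1, !x.2)] ++ y :: m = invRev l ++ [(x.1, !x.2)] ++ (y :: m) := rfl
          refine IsReduced.append_overlap h1 ?_ (by simp)
          rw [List.singleton_append, isReduced_cons_cons]
          refine ⟨fun h => ?_, hm⟩
          by_contra hne
          apply hxy
          refine Prod.ext h ?_
          cases hx : x.2 <;> cases hy : y.2 <;> simp_all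
        rw [inv_mk, mul_mk, FreeGroup.norm, toWord_mk, hred.reduce_eq, lcp, if_neg hxy]
        simp
  
/-- Gromov product -/
def gp (g h : FreeGroup α) : ℕ := lcp g.toWord h.toWord

lemma gp_eq (g h : FreeGroup α) : (g⁻¹ * h).norm + 2 * gp g h = g.norm + h.norm := by
  have := norm_inv_mul (isReduced_toWord (x := g)) (isReduced_toWord (x := h))
  rwa [mk_toWord, mk_toWord] at this

lemma gp_comm (g h : FreeGroup α) : gp g h = gp h g := lcp_comm _ _

lemma gp_ultra (g h k : FreeGroup α) : min (gp g h) (gp h k) ≤ gp g k := lcp_ultra _ _ _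

lemma gp_self_inv (g : FreeGroup α) (hg : g ≠ 1) : 2 * gp g⁻¹ g < g.norm := by
  by_contra hcon
  push Not at hcon
  have hn : g.norm ≠ 0 := fun h => hg (norm_eq_zero.mp h)
  obtain ⟨m, hm⟩ : ∃ m, m = g.norm := ⟨_, rfl⟩
  have hm' : g.toWord.length = m := hm.symm
  obtain ⟨h1, h2, h3⟩ := (le_lcp (gp g⁻¹ g) (g⁻¹).toWord g.toWord).mp le_rfl
  obtain ⟨k, hk⟩ : ∃ k, k = (m - 1) / 2 := ⟨_, rfl⟩
  have hkc : k < gp g⁻¹ g := by omega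
  have hkm : k < m := by omega
  have e : (g⁻¹).toWord[k]? = g.toWord[k]? := by
    have := congrArg (fun l => l[k]?) h3
    simpa [List.getElem?_take, hkc] using this
  rw [toWord_inv, invRev, List.getElem?_reverse (by simpa [hm'] using hkm), List.getElem?_map,
    List.length_map, hm', List.getElem?_eq_getElem (by omega), List.getElem?_eq_getElem (by omega)] at e
  simp only [Option.map_some, Option.some.injEq] at e
  have hred := isReduced_toWord (x := g)
  rcases Nat.even_or_odd' m with ⟨r, hr | hr⟩
  · have hk1 : m - 1 - k = k + 1 := by omega
    simp only [hk1] at e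
    have := List.isChain_iff_getElem.mp hred k (by omega)
    rw [← e] at this
    simp at this
  · have hk1 : m - 1 - k = k := by omega
    simp only [hk1] at e
    have := congrArg Prod.snd e
    simp at this

/-- inverse letter -/
def linv (a : α × Bool) : α × Bool := (a.1, !a.2)

def NonInv (a b : α × Bool) : Prop := a.1 = b.1 → a.2 = b.2

lemma mk_linv (a : α × Bool) : mk [linv a] = (mk [a])⁻¹ := by rw [inv_mk]; rfl

/-- Nielsen reduced families are length increasing -/
lemma nielsen_length {β : Type*} [DecidableEq β] (f : FreeGroup α →* FreeGroup β)
    (hN : ∀ a b c : α × Bool, NonInv a b → NonInv b c →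
      gp (f (mk [a]))⁻¹ (f (mk [b])) + gp (f (mk [b]))⁻¹ (f (mk [c])) < (f (mk [b])).norm)
    (g : FreeGroup α) : g.norm ≤ (f g).norm := by
  have key : ∀ (l : List (α × Bool)) (a : α × Bool), IsReduced (a :: l) →
      (∀ x, NonInv x a → gp (f (mk [x]))⁻¹ (f (mk [a])) < gp (f (mk (a :: l))) (f (mk [a]))) ∧
      l.length + gp (f (mk (a :: l))) (f (mk [a])) ≤ (f (mk (a :: l))).norm := by
    intro l
    induction l with
    | nil =>
      intro a _
      have h0 : gp (f (mk [a])) (f (mk [a])) = (f (mk [a])).norm := by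
        have := gp_eq (f (mk [a])) (f (mk [a]))
        rw [inv_mul_cancel, FreeGroup.norm_one] at this
        omega
      refine ⟨fun x hx => ?_, ?_⟩
      · have := hN x a a hx (fun _ => rfl)
        omega
      · rw [h0]; simp
    | cons b l ih =>
      intro a hred
      rw [isReduced_cons_cons] at hred
      obtain ⟨i1, i2⟩ := ih b hred.2
      have e : mk (a :: b :: l) = mk [a] * mk (b :: l) := by rw [mul_mk]; rfl
      set y := f (mk [b]) with hy
      set P := f (mk (b :: l)) with hP
      set x := f (mk [a]) with hx
      have e' : f (mk (a :: b :: l)) = x * P := by rw [e, _root_.map_mul]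
      rw [e']
      have h1 : gp x⁻¹ y < gp P y := i1 a hred.1
      have hc : gp x⁻¹ P = gp x⁻¹ y := by
        have u1 := gp_ultra x⁻¹ y P
        have u2 := gp_ultra x⁻¹ P y
        rw [gp_comm y P] at u1
        omega
      have g1 := gp_eq x⁻¹ P
      rw [inv_inv, norm_inv_eq] at g1
      have g2 := gp_eq x (x * P)
      rw [inv_mul_cancel_left] at g2
      rw [gp_comm (x * P) x]
      refine ⟨fun z hz => ?_, ?_⟩
      · have : gp (f (mk [z]))⁻¹ x + gp x⁻¹ y < x.norm := hN z a b hz hred.1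
        omega
      · simp only [List.length_cons]
        omega
  cases hw : g.toWord with
  | nil => rw [FreeGroup.norm, hw]; simp
  | cons a l =>
    have hred := isReduced_toWord (x := g)
    rw [hw] at hred
    obtain ⟨h1, h2⟩ := key l a hred
    have h3 := h1 a (fun _ => rfl)
    have e : mk (a :: l) = g := by rw [← hw, mk_toWord]
    rw [e] at h2 h3
    rw [FreeGroup.norm, hw]
    simp only [List.length_cons]
    omega

end
end UEG

end

section
namespace UEG
section
open FreeGroup
variable {α : Type*} [DecidableEq α] [Fintype α]

/-- base for the weights -/
noncomputable def wB (α : Type*) [Fintype α] : ℕ := Fintype.card (α × Bool) + 2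

noncomputable def wd (x : α × Bool) : ℕ := (Fintype.equivFin (α × Bool) x : ℕ)

lemma wd_lt (x : α × Bool) : wd x < wB α := by
  have := (Fintype.equivFin (α × Bool) x).isLt
  unfold wd wB; omega

/-- lexicographic weight of a word -/
noncomputable def wW (l : List (α × Bool)) : ℕ := Nat.ofDigits (wB α) (l.reverse.map wd)

lemma wW_append (a b : List (α × Bool)) : wW (a ++ b) = wW a * wB α ^ b.length + wW b := by
  unfold wW
  rw [List.reverse_append, List.map_append, Nat.ofDigits_append]
  simp; ring

lemma wW_lt (a : List (α × Bool)) : wW a < wB α ^ a.length := by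
  unfold wW
  have := Nat.ofDigits_lt_base_pow_length (b := wB α) (l := a.reverse.map wd) (by unfold wB; omega)
    (by intro x hx; simp only [List.mem_map] at hx; obtain ⟨y, -, rfl⟩ := hx; exact wd_lt y)
  simpa using this

lemma wW_inj {a b : List (α × Bool)} (hl : a.length = b.length) (h : wW a = wW b) : a = b := by
  unfold wW at h
  have := Nat.ofDigits_inj_of_len_eq (b := wB α) (by unfold wB; omega) (by simpa using hl)
    (by intro x hx; simp only [List.mem_map] at hx; obtain ⟨y, -, rfl⟩ := hx; exact wd_lt y)
    (by intro x hx; simp only [List.mem_map] at hx; obtain ⟨y, -, rfl⟩ := hx; exact wd_lt y) h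
  have hinj : Function.Injective (wd (α := α)) := fun x y hxy =>
    (Fintype.equivFin (α × Bool)).injective (Fin.ext hxy)
  exact List.reverse_injective (List.map_injective_iff.mpr hinj this)

noncomputable def wPhi (u : FreeGroup α) : ℕ := wW u.toWord + wW (u⁻¹).toWord

lemma wPhi_inv (u : FreeGroup α) : wPhi u⁻¹ = wPhi u := by
  unfold wPhi; rw [inv_inv, add_comm]

lemma toWord_of_norm {g : FreeGroup α} {L : List (α × Bool)} (h : mk L = g)
    (hl : L.length = g.norm) : g.toWord = L := by
  subst h
  rw [toWord_mk]
  have hs : (reduce L).Sublist L := (reduce.red (L := L)).sublist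
  refine hs.eq_of_length ?_
  rw [hl, FreeGroup.norm, toWord_mk]

lemma wW_mono {s s' a : List (α × Bool)} (hl : s'.length = s.length) (hr : s.length ≤ a.length)
    (h : wW s' < wW s) :
    wW (invRev a ++ invRev s') + wW (s' ++ a) < wW (invRev a ++ invRev s) + wW (s ++ a) := by
  rw [wW_append, wW_append, wW_append, wW_append, invRev_length, invRev_length, hl]
  have h1 := wW_lt (invRev s')
  rw [invRev_length, hl] at h1
  have h2 : wB α ^ s.length ≤ wB α ^ a.length := Nat.pow_le_pow_right (by unfold wB; omega) hr
  have h3 : (wW s' + 1) * wB α ^ a.length ≤ wW s * wB α ^ a.length := Nat.mul_le_mul_right _ h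
  rw [add_mul, one_mul] at h3
  omega

lemma half_step {x y : FreeGroup α} {q a b : List (α × Bool)} (hx : (x⁻¹).toWord = q ++ a)
    (hy : y.toWord = q ++ b) (hqb : q.length = b.length) (hqa : q.length ≤ a.length)
    (hn : (x * y).norm = x.norm) (hP : wPhi x ≤ wPhi (x * y)) : wW q ≤ wW (invRev b) := by
  have hx' : x.toWord = invRev a ++ invRev q := by
    rw [← inv_inv x, toWord_inv, hx, invRev_append]
  have hxn : x.norm = a.length + q.length := by rw [FreeGroup.norm, hx']; simp
  have hxy : (x * y).toWord = invRev a ++ b := by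
    apply toWord_of_norm
    · rw [← mul_mk]
      have e1 : x = mk (invRev a) * mk (invRev q) := by rw [mul_mk, ← hx', mk_toWord]
      have e2 : y = mk q * mk b := by rw [mul_mk, ← hy, mk_toWord]
      rw [e1, e2, ← inv_mk (L := q)]; group
    · rw [hn, hxn]; simp [hqb]
  by_contra hcon
  push Not at hcon
  have := wW_mono (a := a) (by rw [invRev_length, hqb]) hqa hcon
  unfold wPhi at hP
  rw [toWord_inv (x := x * y), hxy, invRev_append, invRev_invRev, hx', hx] at hP
  rw [invRev_invRev] at this
  · omega

lemma linv_linv (a : α × Bool) : linv (linv a) = a := by simp [linv]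

/-- minimal families are Nielsen reduced -/
lemma nielsen_reduced (U : α × Bool → FreeGroup α) (hU : ∀ l, U (linv l) = (U l)⁻¹)
    (h1 : ∀ l, U l ≠ 1)
    (min1 : ∀ l m : α × Bool, l.1 ≠ m.1 → (U l).norm ≤ (U l * U m).norm)
    (min2 : ∀ l m : α × Bool, l.1 ≠ m.1 → (U l * U m).norm = (U l).norm →
      wPhi (U l) ≤ wPhi (U l * U m))
    (a b c : α × Bool) (hab : NonInv a b) (hbc : NonInv b c) :
    gp (U a)⁻¹ (U b) + gp (U b)⁻¹ (U c) < (U b).norm := by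
  have halfL : ∀ l m : α × Bool, l.1 ≠ m.1 → 2 * gp (U l)⁻¹ (U m) ≤ (U m).norm := by
    intro l m hlm
    have := gp_eq (U l)⁻¹ (U m)
    rw [inv_inv, norm_inv_eq] at this
    have := min1 l m hlm
    omega
  have halfR : ∀ l m : α × Bool, l.1 ≠ m.1 → 2 * gp (U l)⁻¹ (U m) ≤ (U l).norm := by
    intro l m hlm
    have := halfL (linv m) (linv l) (fun h => hlm h.symm)
    rwa [hU, hU, inv_inv, norm_inv_eq, gp_comm] at this
  have strict : ∀ l m : α × Bool, NonInv l m → l.1 = m.1 → 2 * gp (U l)⁻¹ (U m) < (U m).norm := by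
    intro l m hlm he
    have : l = m := Prod.ext he (hlm he)
    subst this
    exact gp_self_inv _ (h1 l)
  by_cases e1 : a.1 = b.1
  · have s1 := strict a b hab e1
    by_cases e2 : b.1 = c.1
    · have s2 := strict b c hbc e2
      have : b = c := Prod.ext e2 (hbc e2)
      rw [← this] at s2 ⊢
      omega
    · have := halfR b c e2
      omega
  · have s1 := halfL a b e1
    by_cases e2 : b.1 = c.1
    · have s2 := strict b c hbc e2
      have : b = c := Prod.ext e2 (hbc e2)
      rw [← this] at s2 ⊢
      omega
    · have s2 := halfR b c e2
      by_contra hcon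
      push Not at hcon
      have t1 : 2 * gp (U a)⁻¹ (U b) = (U b).norm := by omega
      have t2 : 2 * gp (U b)⁻¹ (U c) = (U b).norm := by omega
      have r1 := halfR a b e1
      have r2 := halfL b c e2
      obtain ⟨q, a', b', ha, hb, hq⟩ := lcp_spec (U a)⁻¹.toWord (U b).toWord
      obtain ⟨p, p', d, hp, hd, hpl⟩ := lcp_spec (U b)⁻¹.toWord (U c).toWord
      change q.length = gp (U a)⁻¹ (U b) at hq
      change p.length = gp (U b)⁻¹ (U c) at hpl
      have lb : (U b).norm = q.length + b'.length := by rw [FreeGroup.norm, hb]; simp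
      have la : (U a).norm = q.length + a'.length := by
        rw [← norm_inv_eq, FreeGroup.norm, ha]; simp
      have lc : (U c).norm = p.length + d.length := by rw [FreeGroup.norm, hd]; simp
      have hb' : (U b)⁻¹.toWord = invRev b' ++ invRev q := by rw [toWord_inv, hb, invRev_append]
      have hpp : p = invRev b' := by
        rw [hb'] at hp
        exact (List.append_inj hp (by simp; omega)).1.symm
      subst hpp
      have n1 : (U a * U b).norm = (U a).norm := by
        have := gp_eq (U a)⁻¹ (U b)
        rw [inv_inv, norm_inv_eq] at this
        omega
      have n2 : ((U c)⁻¹ * (U b)⁻¹).norm = (U c)⁻¹.norm := by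
        have := gp_eq (U c) (U b)⁻¹
        rw [norm_inv_eq, gp_comm] at this
        rw [norm_inv_eq]
        omega
      have k1 := half_step ha hb (by omega) (by omega) n1 (min2 a b e1 n1)
      have k2 := half_step (x := (U c)⁻¹) (y := (U b)⁻¹) (by rw [inv_inv]; exact hd) hb'
        (by rw [invRev_length, invRev_length]; omega) (by omega) n2
        (by
          have := min2 (linv c) (linv b) (fun h => e2 h.symm)
          rw [hU, hU] at this
          exact this n2)
      rw [invRev_invRev] at k2
      have hqe : q = invRev b' := wW_inj (by rw [invRev_length]; omega) (le_antisymm k1 k2)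
      apply h1 b
      rw [← mk_toWord (x := U b), hb, hqe, ← mul_mk, ← inv_mk, inv_mul_cancel]

end
end UEG

end

section
namespace UEG
section
open FreeGroup
variable {α : Type*} [DecidableEq α]

lemma mk_true (k : α) : mk [(k, true)] = of k := rfl
lemma mk_false (k : α) : mk [(k, false)] = (of k)⁻¹ := by rw [← mk_true, inv_mk]; rfl

/-- elementary Nielsen move, as an endomorphism -/
def homT (l m : α × Bool) : FreeGroup α →* FreeGroup α :=
  lift (fun k => if k = l.1 then (if l.2 then of k * mk [m] else (mk [m])⁻¹ * of k) else of k)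

lemma homT_ne (l m : α × Bool) {k : α} (hk : k ≠ l.1) : homT l m (of k) = of k := by
  simp [homT, hk]

lemma homT_eq (l m : α × Bool) :
    homT l m (of l.1) = if l.2 then of l.1 * mk [m] else (mk [m])⁻¹ * of l.1 := by
  simp [homT]

lemma homT_mk (l m x : α × Bool) (hx : x.1 ≠ l.1) : homT l m (mk [x]) = mk [x] := by
  obtain ⟨k, b⟩ := x
  cases b
  · rw [mk_false, _root_.map_inv, homT_ne _ _ hx]
  · rw [mk_true, homT_ne _ _ hx]

lemma homT_comp (l m : α × Bool) (h : l.1 ≠ m.1) :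
    (homT l (linv m)).comp (homT l m) = MonoidHom.id _ := by
  apply FreeGroup.ext_hom
  intro k
  rw [MonoidHom.comp_apply, MonoidHom.id_apply]
  by_cases hk : k = l.1
  · subst hk
    rw [homT_eq]
    have hm := homT_mk l (linv m) m (fun e => h e.symm)
    split_ifs with hb
    · rw [_root_.map_mul, hm, homT_eq, if_pos hb, mk_linv]; group
    · rw [_root_.map_mul, _root_.map_inv, hm, homT_eq, if_neg hb, mk_linv]; group
  · rw [homT_ne _ _ hk, homT_ne _ _ hk]

/-- elementary Nielsen automorphism -/
def autT (l m : α × Bool) (h : l.1 ≠ m.1) : MulAut (FreeGroup α) :=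
  MonoidHom.toMulEquiv (homT l m) (homT l (linv m)) (homT_comp l m h)
    (by
      have := homT_comp l (linv m) h
      have e : linv (linv m) = m := by simp [linv]
      rwa [e] at this)

lemma autT_apply (l m : α × Bool) (h : l.1 ≠ m.1) (g : FreeGroup α) : autT l m h g = homT l m g := rfl

/-- signed permutation -/
def homS (σ : Equiv.Perm α) (ε : α → Bool) : FreeGroup α →* FreeGroup α :=
  lift (fun k => mk [(σ k, ε k)])

lemma homS_of (σ : Equiv.Perm α) (ε : α → Bool) (k : α) : homS σ ε (of k) = mk [(σ k, ε k)] := by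
  simp [homS]

lemma homS_comp (σ τ : Equiv.Perm α) (ε : α → Bool) (h : ∀ k, τ (σ k) = k) :
    (homS τ (fun k => ε (τ k))).comp (homS σ ε) = MonoidHom.id _ := by
  apply FreeGroup.ext_hom
  intro k
  rw [MonoidHom.comp_apply, MonoidHom.id_apply, homS_of]
  cases hb : ε k
  · rw [mk_false, _root_.map_inv, homS_of, h, hb, mk_false, inv_inv]
  · rw [mk_true, homS_of, h, hb, mk_true]

def autS (σ : Equiv.Perm α) (ε : α → Bool) : MulAut (FreeGroup α) :=
  MonoidHom.toMulEquiv (homS σ ε) (homS σ.symm (fun k => ε (σ.symm k)))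
    (homS_comp σ σ.symm ε (by simp))
    (by
      have := homS_comp σ.symm σ (fun k => ε (σ.symm k)) (by simp)
      simpa using this)

lemma autS_apply (σ : Equiv.Perm α) (ε : α → Bool) (g : FreeGroup α) : autS σ ε g = homS σ ε g := rfl

/-- Nielsen generators -/
def gens (α : Type*) [DecidableEq α] : Set (MulAut (FreeGroup α)) :=
  Set.range (fun p : {p : (α × Bool) × (α × Bool) // p.1.1 ≠ p.2.1} => autT p.1.1 p.1.2 p.2) ∪
  Set.range (fun p : Equiv.Perm α × (α → Bool) => autS p.1 p.2)

lemma gens_finite [Fintype α] : (gens α).Finite := (Set.finite_range _).union (Set.finite_range _)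

lemma sum_move [Fintype α] (φ : FreeGroup α → ℕ) (hφ : ∀ u, φ u⁻¹ = φ u) (f : MulAut (FreeGroup α))
    (l m : α × Bool) (h : l.1 ≠ m.1) :
    ∑ k, φ ((f * autT l m h) (of k)) + φ (f (mk [l])) =
      ∑ k, φ (f (of k)) + φ (f (mk [l]) * f (mk [m])) := by
  rw [← Finset.add_sum_erase _ _ (Finset.mem_univ l.1), ← Finset.add_sum_erase (a := l.1) _ (fun k => φ (f (of k))) (Finset.mem_univ l.1)]
  have h1 : ∑ k ∈ Finset.univ.erase l.1, φ ((f * autT l m h) (of k)) =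
      ∑ k ∈ Finset.univ.erase l.1, φ (f (of k)) := by
    apply Finset.sum_congr rfl
    intro k hk
    rw [MulAut.mul_apply, autT_apply, homT_ne _ _ (Finset.ne_of_mem_erase hk)]
  rw [h1]
  have h2 : φ (f (mk [l])) = φ (f (of l.1)) := by
    obtain ⟨k, b⟩ := l
    cases b
    · rw [mk_false, _root_.map_inv, hφ]
    · rw [mk_true]
  have h3 : φ ((f * autT l m h) (of l.1)) = φ (f (mk [l]) * f (mk [m])) := by
    rw [MulAut.mul_apply, autT_apply, homT_eq]
    obtain ⟨k, b⟩ := l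
    cases b
    · rw [if_neg (by simp), mk_false, ← hφ, ← _root_.map_inv, ← _root_.map_mul]
      congr 2
      group
    · rw [if_pos rfl, mk_true, _root_.map_mul]
  rw [h2, h3]
  ring

lemma norm_one_form {g : FreeGroup α} (h : g.norm = 1) : ∃ x, g = mk [x] := by
  obtain ⟨x, hx⟩ := List.length_eq_one_iff.mp h
  exact ⟨x, by rw [← hx, mk_toWord]⟩

lemma is_signed [Finite α] (f : MulAut (FreeGroup α)) (hf : ∀ k, (f (of k)).norm ≤ 1) :
    ∃ σ ε, f = autS σ ε := by
  have h1 : ∀ k, ∃ x, f (of k) = mk [x] := by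
    intro k
    apply norm_one_form
    have : (f (of k)).norm ≠ 0 := by
      intro h
      rw [FreeGroup.norm_eq_zero] at h
      have := (MulEquiv.map_eq_one_iff f).mp h
      exact of_ne_one k this
    have := hf k
    omega
  choose s hs using h1
  have inj : Function.Injective (fun k => (s k).1) := by
    intro k k' hkk
    by_cases hb : (s k).2 = (s k').2
    · have : s k = s k' := Prod.ext hkk hb
      apply of_injective
      apply f.injective
      rw [hs, hs, this]
    · exfalso
      have : s k = linv (s k') := by
        refine Prod.ext hkk ?_
        simp only [linv]
        cases h1 : (s k).2 <;> cases h2 : (s k').2 <;> simp_all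
      have e : f (of k) = f ((of k')⁻¹) := by
        rw [_root_.map_inv, hs, hs, this, mk_linv]
      have e2 := f.injective e
      rw [← mk_false, ← mk_true] at e2
      have := congrArg toWord e2
      simp at this
  refine ⟨Equiv.ofBijective _ (Finite.injective_iff_bijective.mp inj), fun k => (s k).2, ?_⟩
  have : (f : FreeGroup α →* FreeGroup α) = homS (Equiv.ofBijective _ (Finite.injective_iff_bijective.mp inj)) (fun k => (s k).2) := by
    apply FreeGroup.ext_hom
    intro k
    rw [homS_of]
    exact hs k
  apply MulEquiv.ext
  intro g
  exact DFunLike.congr_fun this g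

/-- Nielsen's theorem -/
theorem gens_closure [Fintype α] : Subgroup.closure (gens α) = ⊤ := by
  have key : ∀ (N P : ℕ) (f : MulAut (FreeGroup α)), ∑ k, (f (of k)).norm = N →
      ∑ k, wPhi (f (of k)) = P → f ∈ Subgroup.closure (gens α) := by
    intro N
    induction N using Nat.strong_induction_on with
    | _ N ihN =>
    intro P
    induction P using Nat.strong_induction_on with
    | _ P ihP =>
    intro f hN hP
    have hT : ∀ l m h, autT l m h ∈ Subgroup.closure (gens α) := fun l m h =>
      Subgroup.subset_closure (Or.inl ⟨⟨(l, m), h⟩, rfl⟩)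
    by_cases c1 : ∃ l m : α × Bool, l.1 ≠ m.1 ∧ (f (mk [l]) * f (mk [m])).norm < (f (mk [l])).norm
    · obtain ⟨l, m, h, hlt⟩ := c1
      have := sum_move FreeGroup.norm (fun u => norm_inv_eq) f l m h
      have := ihN _ (by omega) _ (f * autT l m h) rfl rfl
      exact (Subgroup.mul_mem_cancel_right _ (hT l m h)).mp this
    by_cases c2 : ∃ l m : α × Bool, l.1 ≠ m.1 ∧ (f (mk [l]) * f (mk [m])).norm = (f (mk [l])).norm ∧
        wPhi (f (mk [l]) * f (mk [m])) < wPhi (f (mk [l]))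
    · obtain ⟨l, m, h, he, hlt⟩ := c2
      have e1 := sum_move FreeGroup.norm (fun u => norm_inv_eq) f l m h
      have e2 := sum_move wPhi wPhi_inv f l m h
      have := ihP _ (by omega) (f * autT l m h) (by omega) rfl
      exact (Subgroup.mul_mem_cancel_right _ (hT l m h)).mp this
    push Not at c1 c2
    have hred := nielsen_reduced (fun l => f (mk [l])) (fun l => by
        show f (mk [linv l]) = (f (mk [l]))⁻¹
        rw [mk_linv, _root_.map_inv])
      (fun l h => by
        have := (MulEquiv.map_eq_one_iff f).mp h
        have := congrArg toWord this
        simp at this)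
      c1 c2
    have hlen := nielsen_length (f : FreeGroup α →* FreeGroup α) hred
    have : ∀ k, (f⁻¹ (of k)).norm ≤ 1 := by
      intro k
      have := hlen (f⁻¹ (of k))
      have e : (f : FreeGroup α →* FreeGroup α) (f⁻¹ (of k)) = of k := MulAut.apply_inv_self _ f (of k)
      rw [e] at this
      simpa using this
    obtain ⟨σ, ε, hs⟩ := is_signed _ this
    rw [← Subgroup.inv_mem_iff, hs]
    exact Subgroup.subset_closure (Or.inr ⟨(σ, ε), rfl⟩)
  exact eq_top_iff.mpr fun f _ => key _ _ f rfl rfl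

end
end UEG

end

section
namespace UEG
section
open FreeGroup
variable {n : ℕ}

/-- exponent sum homomorphisms -/
def expoHom (i : Fin n) : FreeGroup (Fin n) →* Multiplicative ℤ :=
  lift (fun k => Multiplicative.ofAdd (if k = i then 1 else 0))

def expo (i : Fin n) (g : FreeGroup (Fin n)) : ℤ := Multiplicative.toAdd (expoHom i g)

lemma expo_one (i : Fin n) : expo i 1 = 0 := by simp [expo]
lemma expo_mul (i : Fin n) (g h) : expo i (g * h) = expo i g + expo i h := by simp [expo]
lemma expo_inv (i : Fin n) (g) : expo i g⁻¹ = - expo i g := by simp [expo]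
lemma expo_of (i k : Fin n) : expo i (of k) = if k = i then 1 else 0 := by simp [expo, expoHom]

/-- sign of a letter -/
def sgn (b : Bool) : ℤ := if b then 1 else -1

lemma expo_mk (i : Fin n) (x : Fin n × Bool) : expo i (mk [x]) = if x.1 = i then sgn x.2 else 0 := by
  obtain ⟨k, b⟩ := x
  cases b
  · rw [mk_false, expo_inv, expo_of]; simp [sgn]; split_ifs <;> simp
  · rw [mk_true, expo_of]; simp [sgn]

lemma expo_apply (f : MulAut (FreeGroup (Fin n))) (i : Fin n) (g : FreeGroup (Fin n)) :
    expo i (f g) = ∑ k, expo i (f (of k)) * expo k g := by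
  induction g using FreeGroup.induction_on with
  | C1 => simp [expo_one]
  | of x => simp [expo_of]
  | inv_of x ih => simp only [_root_.map_inv, expo_inv, ih, mul_neg, Finset.sum_neg_distrib]
  | mul x y hx hy => simp only [_root_.map_mul, expo_mul, hx, hy, mul_add, Finset.sum_add_distrib]

/-- the abelianization representation -/
noncomputable def abRep (n : ℕ) : MulAut (FreeGroup (Fin n)) →* Mat n where
  toFun f := Matrix.of fun i j => (expo i (f (of j)) : ℂ)
  map_one' := by
    ext i j
    simp [expo_of, Matrix.one_apply, eq_comm]
  map_mul' f g := by
    ext i j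
    rw [Matrix.mul_apply]
    simp only [Matrix.of_apply, MulAut.mul_apply]
    rw [expo_apply f i (g (of j))]
    push_cast
    rfl

lemma abRep_apply (f : MulAut (FreeGroup (Fin n))) (i j : Fin n) :
    abRep n f i j = (expo i (f (of j)) : ℂ) := rfl

lemma abRep_autT (l m : Fin n × Bool) (h : l.1 ≠ m.1) :
    abRep n (autT l m h) = Matrix.transvection m.1 l.1 ((sgn l.2 * sgn m.2 : ℤ) : ℂ) := by
  ext i j
  rw [abRep_apply, autT_apply, Matrix.transvection, Matrix.add_apply, Matrix.one_apply,
    Matrix.single_apply]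
  by_cases hj : j = l.1
  · subst hj
    rw [homT_eq]
    by_cases hb : l.2 = true
    · rw [if_pos hb, expo_mul, expo_mk, expo_of, hb]
      simp only [eq_comm (a := l.1) (b := i)]
      simp [sgn]
    · rw [if_neg hb, expo_mul, expo_inv, expo_mk, expo_of]
      simp only [Bool.not_eq_true] at hb
      rw [hb, add_comm]
      simp only [eq_comm (a := l.1) (b := i)]
      simp [sgn]
      split_ifs <;> simp
  · rw [homT_ne _ _ hj, expo_of]
    have : ¬ (m.1 = i ∧ l.1 = j) := fun e => hj e.2.symm
    rw [if_neg this]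
    simp [eq_comm]

lemma abRep_autS (σ : Equiv.Perm (Fin n)) (ε : Fin n → Bool) (i j : Fin n) :
    abRep n (autS σ ε) i j = ((if σ j = i then sgn (ε j) else 0 : ℤ) : ℂ) := by
  rw [abRep_apply, autS_apply, homS_of, expo_mk]

lemma transvection_transpose (i j : Fin n) (c : ℂ) :
    (Matrix.transvection i j c).transpose = Matrix.transvection j i c := by
  simp [Matrix.transvection]

lemma abRep_tr (f : MulAut (FreeGroup (Fin n))) : ∃ f', abRep n f' = (abRep n f).transpose := by
  have hf : f ∈ Subgroup.closure (gens (Fin n)) := by rw [gens_closure]; trivial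
  induction hf using Subgroup.closure_induction with
  | mem x hx =>
    rcases hx with ⟨⟨⟨l, m⟩, h⟩, rfl⟩ | ⟨⟨σ, ε⟩, rfl⟩
    · refine ⟨autT m l (fun e => h e.symm), ?_⟩
      show _ = (abRep n (autT l m h)).transpose
      rw [abRep_autT, abRep_autT, transvection_transpose, mul_comm]
    · refine ⟨autS σ.symm (fun k => ε (σ.symm k)), ?_⟩
      ext i j
      show _ = abRep n (autS σ ε) j i
      rw [abRep_autS, abRep_autS]
      by_cases h : σ i = j
      · subst h; simp
      · have : ¬ σ.symm j = i := fun e => h (by rw [← e]; simp)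
        rw [if_neg h, if_neg this]
  | one => exact ⟨1, by simp⟩
  | mul x y _ _ hx hy =>
    obtain ⟨x', hx⟩ := hx
    obtain ⟨y', hy⟩ := hy
    exact ⟨y' * x', by rw [_root_.map_mul, _root_.map_mul, Matrix.transpose_mul, hx, hy]⟩
  | inv x _ hx =>
    obtain ⟨x', hx⟩ := hx
    refine ⟨x'⁻¹, ?_⟩
    have h1 : (abRep n x⁻¹).transpose * abRep n x' = 1 := by
      rw [hx, ← Matrix.transpose_mul, ← _root_.map_mul, mul_inv_cancel, _root_.map_one, Matrix.transpose_one]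
    calc abRep n x'⁻¹ = ((abRep n x⁻¹).transpose * abRep n x') * abRep n x'⁻¹ := by rw [h1, one_mul]
      _ = (abRep n x⁻¹).transpose * abRep n (x' * x'⁻¹) := by rw [mul_assoc, _root_.map_mul]
      _ = _ := by rw [mul_inv_cancel, _root_.map_one, mul_one]

lemma goodRep (n : ℕ) : GoodRep (abRep n) where
  int g := ⟨Matrix.of fun i j => expo i (g (of j)), rfl⟩
  tr := abRep_tr
  tv i j k hij := by
    induction k using Int.induction_on with
    | zero => exact ⟨1, by simp⟩
    | succ k ih =>
      obtain ⟨g, hg⟩ := ih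
      refine ⟨g * autT (j, true) (i, true) (fun e => hij e.symm), ?_⟩
      rw [_root_.map_mul, hg, abRep_autT, Matrix.transvection_mul_transvection_same _ _ hij]
      simp [sgn]
    | pred k ih =>
      obtain ⟨g, hg⟩ := ih
      refine ⟨g * autT (j, true) (i, false) (fun e => hij e.symm), ?_⟩
      rw [_root_.map_mul, hg, abRep_autT, Matrix.transvection_mul_transvection_same _ _ hij]
      simp [sgn, sub_eq_add_neg]

lemma aut_fg (n : ℕ) : ∃ S : Finset (MulAut (FreeGroup (Fin n))), Subgroup.closure (S : Set (MulAut (FreeGroup (Fin n)))) = ⊤ :=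
  ⟨(gens_finite (α := Fin n)).toFinset, by rw [Set.Finite.coe_toFinset, gens_closure]⟩

end
end UEG

end

/-- for `n ≥ 2`, `Aut(Fₙ)` has uniformly exponential growth. -/
theorem aut_freeGroup_uniform_exponential_growth (n : ℕ) (hn : 2 ≤ n) :
    1 < minGrowth (MulAut (FreeGroup (Fin n))) := by
  exact UEG.growth_main (UEG.goodRep n) hn (UEG.aut_fg n)
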